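/- arXiv:1304.7541 — 3 statements merged into one kernel-verified Lean document; each statement's English description precedes it below -/
import Mathlib

section
/- Suppose m ≥ 1 is an integer divisible by l(l−1). Then (I^{(m)})_d = 0 for every degree d with 0 ≤ d < 2m − m/l, and dim_K (I^{(m)})_{2m − m/l} = 1. In particular, the least degree of a nonzero homogeneous element of I^{(m)} is exactly 2m − m/l. -/
open MvPolynomial Filter

/-- The degree-`d` homogeneous component of a homogeneous ideal `J ⊆ K[x,y,z]`,
as a `K`-vector subspace. -/
noncomputable def degComp {K : Type*} [Field K] (J : Ideal (MvPolynomial (Fin 3) K)) (d : ℕ) :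
    Submodule K (MvPolynomial (Fin 3) K) :=
  Submodule.restrictScalars K J ⊓ homogeneousSubmodule (Fin 3) K d

/-- `dim_K J_d`. -/
noncomputable def hdim {K : Type*} [Field K] (J : Ideal (MvPolynomial (Fin 3) K)) (d : ℕ) : ℕ :=
  Module.finrank K (degComp J d)

/-- The subspace `R_1 · J_{d-1}` of products of linear forms with degree-`(d-1)` elements. -/
noncomputable def oneGen {K : Type*} [Field K] (J : Ideal (MvPolynomial (Fin 3) K)) (d : ℕ) :
    Submodule K (MvPolynomial (Fin 3) K) :=
  Submodule.span K
    {x | ∃ f ∈ homogeneousSubmodule (Fin 3) K 1, ∃ g ∈ degComp J (d - 1), x = f * g}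

/-- `v_d(J) = dim_K J_d / (R_1 · J_{d-1})`, the number of minimal generators of `J`
in degree `d`. -/
noncomputable def vnum {K : Type*} [Field K] (J : Ideal (MvPolynomial (Fin 3) K)) (d : ℕ) : ℕ :=
  Module.finrank K
    (↥(degComp J d) ⧸ Submodule.comap (degComp J d).subtype (oneGen J d))

/-!
Put the point off the line at `(1 : 0 : 0)` and the line at `x = 0`, let `λ i` be a linear form in
`y, z` vanishing at the `i`-th point of the line, and expand a form `F = ∑ j, x ^ j * g j` with
`g j ∈ K[y, z]`. Then `F` vanishes to order `m` at `(1 : 0 : 0)` iff every `g j` lies in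
`(y, z) ^ m`, and to order `m` at the `i`-th point of the line iff `λ i ^ (m - j) ∣ g j` for all
`j`. So if `g j ≠ 0` and `F` has degree `d`, then `m ≤ d - j` and, the `λ i` being pairwise coprime,
`l * (m - j) ≤ d - j`. For `m = l * b` and `d ≤ 2 * m - b` these inequalities force `d = 2 * m - b`
and `j = m - b`, and then `g j` has degree `m = l * b` and is divisible by `(∏ i, λ i) ^ b`, hence
is a scalar multiple of it.
-/

namespace FatPoints

lemma comap_pow_of_bijective {R S F : Type*} [CommRing R] [CommRing S] [FunLike F R S]
    [RingHomClass F R S] (f : F) (hf : Function.Bijective f) (I : Ideal S) (n : ℕ) :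
    (I ^ n).comap f = I.comap f ^ n := by
  conv_lhs => rw [← Ideal.map_comap_of_surjective f hf.surjective I, ← Ideal.map_pow]
  exact Ideal.comap_map_of_bijective f hf

lemma mem_comap_constantCoeff_pow_iff {A : Type*} [CommRing A] {I : Ideal A} {m : ℕ}
    {f : Polynomial A} :
    f ∈ I.comap Polynomial.constantCoeff ^ m ↔ ∀ j, f.coeff j ∈ I ^ (m - j) := by
  refine ⟨fun hf => ?_, fun hf => ?_⟩
  · induction m generalizing f with
    | zero => simp
    | succ m ih =>
      rw [pow_succ] at hf
      refine Submodule.mul_induction_on hf (fun g hg h hh j => ?_) fun g h hg hh j => ?_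
      · rw [Polynomial.coeff_mul]
        refine Ideal.sum_mem _ fun ⟨a, b⟩ hab => ?_
        rw [Finset.HasAntidiagonal.mem_antidiagonal] at hab
        obtain rfl | hb := Nat.eq_zero_or_pos b
        · refine Ideal.pow_le_pow_right (show m + 1 - j ≤ m - a + 1 by lia) ?_
          rw [pow_succ]
          exact Ideal.mul_mem_mul (ih hg a) hh
        · exact Ideal.mul_mem_right _ _ (Ideal.pow_le_pow_right (by lia) (ih hg a))
      · rw [Polynomial.coeff_add]
        exact Ideal.add_mem _ (hg j) (hh j)
  · have hX : Polynomial.X ∈ I.comap Polynomial.constantCoeff := by simp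
    have hC : I.map Polynomial.C ≤ I.comap Polynomial.constantCoeff :=
      Ideal.map_le_iff_le_comap.2 fun a ha => by simpa using ha
    rw [f.as_sum_range_C_mul_X_pow]
    refine Ideal.sum_mem _ fun j _ => Ideal.pow_le_pow_right (show m ≤ m - j + j by lia) ?_
    rw [pow_add]
    refine Ideal.mul_mem_mul (Ideal.pow_right_mono hC _ ?_) (Ideal.pow_mem_pow hX j)
    rw [← Ideal.map_pow]
    exact Ideal.mem_map_of_mem _ (hf j)

section PointIdeal

variable {σ R : Type*} [CommRing R]

/-- The restriction of a polynomial `F` to the parametrized line `T ↦ T • v`. -/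
noncomputable def restrictLine (v : σ → R) : MvPolynomial σ R →ₐ[R] Polynomial R :=
  aeval fun i => Polynomial.C (v i) * Polynomial.X

/-- The homogeneous ideal of the point of projective space with homogeneous coordinates `v`,
encoded as the polynomials that vanish identically on the line `T ↦ T • v`; this does the right
thing over every field, see `mem_pointIdeal_iff`. -/
noncomputable def pointIdeal (v : σ → R) : Ideal (MvPolynomial σ R) :=
  RingHom.ker (restrictLine v)

lemma coeff_restrictLine (v : σ → R) (F : MvPolynomial σ R) (n : ℕ) :
    (restrictLine v F).coeff n = eval v (homogeneousComponent n F) := by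
  induction F using MvPolynomial.induction_on' with
  | monomial s a =>
    have hline : restrictLine v (monomial s a) =
        Polynomial.C (eval v (monomial s a)) * Polynomial.X ^ s.degree := by
      simp [restrictLine, aeval_monomial, eval_monomial, mul_pow, Finsupp.prod,
        Finset.prod_mul_distrib, Finset.prod_pow_eq_pow_sum, Finsupp.degree_apply, mul_assoc]
    rw [hline, Polynomial.coeff_C_mul_X_pow,
      homogeneousComponent_of_mem (isHomogeneous_monomial a rfl)]
    split_ifs <;> simp
  | add F G hF hG => simp [hF, hG]

lemma mem_pointIdeal_iff {v : σ → R} {F : MvPolynomial σ R} :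
    F ∈ pointIdeal v ↔ ∀ n, eval v (homogeneousComponent n F) = 0 := by
  simp_rw [pointIdeal, RingHom.mem_ker, ← coeff_restrictLine, Polynomial.ext_iff,
    Polynomial.coeff_zero]

lemma pointIdeal_le_of_X_sub_mem {v : σ → R} {J : Ideal (MvPolynomial σ R)}
    (T : MvPolynomial σ R) (hT : ∀ i, X i - C (v i) * T ∈ J) : pointIdeal v ≤ J := by
  have hfactor : Ideal.Quotient.mkₐ R J =
      (Polynomial.aeval (Ideal.Quotient.mkₐ R J T)).comp (restrictLine v) := by
    ext i
    have hXi := Ideal.Quotient.eq.2 (hT i)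
    rw [map_mul, ← algebraMap_eq, Ideal.Quotient.mk_algebraMap] at hXi
    simpa [restrictLine] using hXi
  intro F hF
  rw [← Ideal.Quotient.eq_zero_iff_mem, ← Ideal.Quotient.mkₐ_eq_mk R, hfactor, AlgHom.comp_apply,
    show restrictLine v F = 0 from hF, map_zero]

/-- The ideal `⋂ i, 𝔭ᵢ ^ m` of the fat point scheme with points `p i` of multiplicity `m`. -/
noncomputable def fatPointIdeal {ι : Type*} (p : ι → σ → R) (m : ℕ) : Ideal (MvPolynomial σ R) :=
  ⨅ i, pointIdeal (p i) ^ m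

end PointIdeal

section LinearChange

variable {σ R : Type*} [Fintype σ] [DecidableEq σ] [CommRing R]

/-- The change of coordinates `F ↦ F ∘ φ` on polynomials induced by a linear automorphism `φ`. -/
noncomputable def linearChange (φ : (σ → R) ≃ₗ[R] (σ → R)) :
    MvPolynomial σ R ≃ₐ[R] MvPolynomial σ R :=
  AlgEquiv.ofAlgHom (bind₁ (LinearMap.toMatrix' φ.toLinearMap).toMvPolynomial)
    (bind₁ (LinearMap.toMatrix' φ.symm.toLinearMap).toMvPolynomial)
    (by ext1 i; simp [← Matrix.toMvPolynomial_mul, ← LinearMap.toMatrix'_comp])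
    (by ext1 i; simp [← Matrix.toMvPolynomial_mul, ← LinearMap.toMatrix'_comp])

variable (φ : (σ → R) ≃ₗ[R] (σ → R))

lemma isHomogeneous_linearChange {F : MvPolynomial σ R} {d : ℕ} (hF : F.IsHomogeneous d) :
    (linearChange φ F).IsHomogeneous d := by
  rw [← one_mul d]
  exact hF.aeval _ (Matrix.toMvPolynomial_isHomogeneous
    (LinearMap.toMatrix' φ.toLinearMap))

lemma isHomogeneous_linearChange_iff {F : MvPolynomial σ R} {d : ℕ} :
    (linearChange φ F).IsHomogeneous d ↔ F.IsHomogeneous d := by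
  refine ⟨fun hF => ?_, isHomogeneous_linearChange φ⟩
  rw [← (linearChange φ).symm_apply_apply F]
  exact isHomogeneous_linearChange φ.symm hF

lemma comap_linearChange_pointIdeal (v : σ → R) :
    (pointIdeal v).comap (linearChange φ) = pointIdeal (φ v) := by
  have hline : (restrictLine v).comp (linearChange φ).toAlgHom = restrictLine (φ v) := by
    ext1 i
    have hφ : φ v i = (LinearMap.toMatrix' φ.toLinearMap).mulVec v i := by
      simp [LinearMap.toMatrix'_mulVec]
    simp [linearChange, restrictLine, hφ, Matrix.toMvPolynomial, Matrix.mulVec, dotProduct,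
      aeval_monomial, Finset.sum_mul, mul_assoc]
  ext F
  exact Iff.of_eq (congrArg (· = 0) (DFunLike.congr_fun hline F))

lemma comap_linearChange_fatPointIdeal {ι : Type*} (p : ι → σ → R) (m : ℕ) :
    (fatPointIdeal p m).comap (linearChange φ) = fatPointIdeal (fun i => φ (p i)) m := by
  simp_rw [fatPointIdeal, Ideal.comap_iInf,
    comap_pow_of_bijective _ (linearChange φ).bijective, comap_linearChange_pointIdeal]

end LinearChange

lemma hdim_comap_linearChange {K : Type*} [Field K] (φ : (Fin 3 → K) ≃ₗ[K] (Fin 3 → K))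
    (J : Ideal (MvPolynomial (Fin 3) K)) (d : ℕ) :
    hdim (J.comap (linearChange φ)) d = hdim J d := by
  have hcomap : degComp (J.comap (linearChange φ)) d =
      (degComp J d).comap (linearChange φ).toLinearMap := by
    ext F
    exact and_congr_right' (isHomogeneous_linearChange_iff φ).symm
  rw [hdim, hdim, hcomap]
  exact Submodule.comap_equiv_eq_map_symm (linearChange φ).toLinearEquiv (degComp J d) ▸
    LinearEquiv.finrank_map_eq (linearChange φ).toLinearEquiv.symm (degComp J d)

section FinSuccEquiv

variable {R : Type*} [CommRing R] {n : ℕ}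

lemma mem_idealOfVars_iff {σ : Type*} {F : MvPolynomial σ R} :
    F ∈ idealOfVars σ R ↔ constantCoeff F = 0 := by
  simpa [Finsupp.degree_eq_zero_iff, constantCoeff_eq] using mem_pow_idealOfVars_iff' 1 F

lemma pointIdeal_single_zero :
    pointIdeal (Pi.single 0 1 : Fin (n + 1) → R) =
      ((idealOfVars (Fin n) R).map Polynomial.C).comap (finSuccEquiv R n) := by
  have hline : (restrictLine (Pi.single 0 1 : Fin (n + 1) → R)) =
      (Polynomial.mapAlgHom (aeval (0 : Fin n → R))).comp (finSuccEquiv R n).toAlgHom := by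
    ext1 i
    cases i using Fin.cases <;> simp [restrictLine, finSuccEquiv_X_zero, finSuccEquiv_X_succ]
  ext F
  simp [pointIdeal, hline, Ideal.mem_map_C_iff, mem_idealOfVars_iff, Polynomial.ext_iff,
    constantCoeff_eq]

lemma pointIdeal_cons_zero (v : Fin n → R) :
    pointIdeal (Fin.cons 0 v : Fin (n + 1) → R) =
      ((pointIdeal v).comap Polynomial.constantCoeff).comap (finSuccEquiv R n) := by
  have hline : restrictLine (Fin.cons 0 v : Fin (n + 1) → R) =
      ((restrictLine v).comp ((Polynomial.aeval 0).restrictScalars R)).comp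
        (finSuccEquiv R n).toAlgHom := by
    ext1 i
    cases i using Fin.cases <;> simp [restrictLine, finSuccEquiv_X_zero, finSuccEquiv_X_succ]
  ext F
  simp [pointIdeal, hline, Polynomial.coeff_zero_eq_eval_zero]

lemma mem_pointIdeal_single_zero_pow_iff {m : ℕ} {F : MvPolynomial (Fin (n + 1)) R} :
    F ∈ pointIdeal (Pi.single 0 1) ^ m ↔
      ∀ j, (finSuccEquiv R n F).coeff j ∈ idealOfVars (Fin n) R ^ m := by
  rw [pointIdeal_single_zero, ← comap_pow_of_bijective _ (finSuccEquiv R n).bijective,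
    Ideal.mem_comap, ← Ideal.map_pow, Ideal.mem_map_C_iff]

lemma mem_pointIdeal_cons_zero_pow_iff {v : Fin n → R} {m : ℕ}
    {F : MvPolynomial (Fin (n + 1)) R} :
    F ∈ pointIdeal (Fin.cons 0 v) ^ m ↔
      ∀ j, (finSuccEquiv R n F).coeff j ∈ pointIdeal v ^ (m - j) := by
  rw [pointIdeal_cons_zero, ← comap_pow_of_bijective _ (finSuccEquiv R n).bijective,
    Ideal.mem_comap, mem_comap_constantCoeff_pow_iff]

end FinSuccEquiv

section LinearCoordinates

variable {K V : Type*} [Field K] [AddCommGroup V] [Module K V]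

lemma exists_linearEquiv_apply_eq_single_zero {n : ℕ} (hn : Module.finrank K V = n + 1)
    (f : Module.Dual K V) {q : V} (hq : f q ≠ 0) :
    ∃ φ : V ≃ₗ[K] (Fin (n + 1) → K), φ q = Pi.single 0 1 ∧ ∀ x, f x = 0 → φ x 0 = 0 := by
  have hf : f ≠ 0 := by rintro rfl; exact hq rfl
  have : FiniteDimensional K V := Module.finite_of_finrank_eq_succ hn
  have hker : Module.finrank K (LinearMap.ker f) = n := by
    have := Module.Dual.finrank_ker_add_one_of_ne_zero hf
    lia
  let b := Module.Basis.mkFinCons q (Module.finBasisOfFinrankEq K (LinearMap.ker f) hker)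
    (fun c x hx hc => by simpa [LinearMap.mem_ker.1 hx, hq] using congrArg f hc)
    (fun z => ⟨-(f z / f q), by simp [hq]⟩)
  have hb0 : b 0 = q := by simp [b]
  have hbsucc (i : Fin n) : f (b i.succ) = 0 := by simp [b]
  clear_value b
  have hcoord : f = f q • b.coord 0 := by
    refine b.ext (Fin.cases ?_ fun i => ?_)
    · simp [← hb0]
    · simp [hbsucc]
  refine ⟨b.equivFun, ?_, fun x hx => ?_⟩
  · ext i
    rw [← hb0, b.equivFun_self, Pi.single_apply]
    simp only [eq_comm]
  · rw [hcoord] at hx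
    simpa [hq] using hx

end LinearCoordinates

section BinaryForms

variable {K : Type*} [Field K]

/-- The linear form on `ℙ¹` whose zero is the point with homogeneous coordinates `v`. -/
noncomputable def pointForm (v : Fin 2 → K) : MvPolynomial (Fin 2) K :=
  C (v 1) * X 0 - C (v 0) * X 1

lemma isHomogeneous_pointForm (v : Fin 2 → K) : (pointForm v).IsHomogeneous 1 :=
  (isHomogeneous_C_mul_X _ _).sub (isHomogeneous_C_mul_X _ _)

lemma pointForm_ne_zero {v : Fin 2 → K} (hv : v ≠ 0) : pointForm v ≠ 0 := by
  contrapose! hv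
  ext i
  fin_cases i
  · simpa [pointForm] using congrArg (eval ![0, 1]) hv
  · simpa [pointForm] using congrArg (eval ![1, 0]) hv

lemma pointIdeal_eq_span_pointForm {v : Fin 2 → K} (hv : v ≠ 0) :
    pointIdeal v = Ideal.span {pointForm v} := by
  refine le_antisymm ?_ ?_
  · obtain ⟨s, t, hst⟩ : ∃ s t : K, s * v 0 + t * v 1 = 1 := by
      obtain h0 | h1 : v 0 ≠ 0 ∨ v 1 ≠ 0 := by
        contrapose! hv
        ext i
        fin_cases i <;> simp [hv]
      · exact ⟨(v 0)⁻¹, 0, by simp [h0]⟩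
      · exact ⟨0, (v 1)⁻¹, by simp [h1]⟩
    have hstC : C s * C (v 0) + C t * C (v 1) = (1 : MvPolynomial (Fin 2) K) := by
      simp only [← C_mul, ← C_add, hst, C_1]
    refine pointIdeal_le_of_X_sub_mem (C s * X 0 + C t * X 1) (Fin.forall_fin_two.2 ⟨?_, ?_⟩)
    · refine Ideal.mem_span_singleton'.2 ⟨C t, ?_⟩
      simp only [pointForm]
      linear_combination X 0 * hstC
    · refine Ideal.mem_span_singleton'.2 ⟨-C s, ?_⟩
      simp only [pointForm]
      linear_combination X 1 * hstC
  · rw [Ideal.span_singleton_le_iff_mem, mem_pointIdeal_iff]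
    intro n
    rw [homogeneousComponent_of_mem (isHomogeneous_pointForm v)]
    split_ifs <;> simp [pointForm, mul_comm]

lemma isRelPrime_pointForm {v w : Fin 2 → K} (hvw : LinearIndependent K ![v, w]) :
    IsRelPrime (pointForm v) (pointForm w) := by
  have hdet : IsUnit (C (v 0 * w 1 - v 1 * w 0) : MvPolynomial (Fin 2) K) := by
    have hrows := (Matrix.linearIndependent_rows_iff_isUnit (A := Matrix.of ![v, w])).1 hvw
    rw [Matrix.isUnit_iff_isUnit_det, Matrix.det_fin_two] at hrows
    convert hrows.map C using 2
    simp [mul_comm]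
  intro g hgv hgw
  have hX (i : Fin 2) : g ∣ X i := by
    rw [← hdet.dvd_mul_left]
    have hcomb := dvd_sub (hgw.mul_left (C (v i))) (hgv.mul_left (C (w i)))
    convert hcomb using 1
    simp only [pointForm, map_sub, map_mul]
    fin_cases i <;> simp <;> ring
  have hX01 : IsRelPrime (X 0 : MvPolynomial (Fin 2) K) (X 1) := by
    rw [(X_prime (i := 0)).irreducible.isRelPrime_iff_not_dvd, X_dvd_X]
    decide
  exact hX01 (hX 0) (hX 1)

end BinaryForms

section HomogeneousDvd

variable {σ R : Type*} [CommRing R] [IsDomain R] {f g : MvPolynomial σ R} {m n : ℕ}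

lemma le_of_isHomogeneous_of_dvd (hf : f.IsHomogeneous m) (hg : g.IsHomogeneous n) (hg0 : g ≠ 0)
    (hfg : f ∣ g) : m ≤ n := by
  rw [← hf.totalDegree (ne_zero_of_dvd_ne_zero hg0 hfg), ← hg.totalDegree hg0]
  exact totalDegree_le_of_dvd_of_isDomain hfg hg0

lemma exists_eq_smul_of_isHomogeneous_of_dvd (hf : f.IsHomogeneous n) (hg : g.IsHomogeneous n)
    (hfg : f ∣ g) : ∃ c : R, g = c • f := by
  obtain rfl | hg0 := eq_or_ne g 0
  · exact ⟨0, by simp⟩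
  obtain ⟨h, rfl⟩ := hfg
  obtain ⟨hf0, hh0⟩ := mul_ne_zero_iff.1 hg0
  have hdeg := totalDegree_mul_of_isDomain hf0 hh0
  rw [hg.totalDegree hg0, hf.totalDegree hf0, left_eq_add, totalDegree_eq_zero_iff_eq_C] at hdeg
  exact ⟨coeff 0 h, by rw [smul_eq_C_mul, ← hdeg, mul_comm]⟩

end HomogeneousDvd

lemma le_of_mem_idealOfVars_pow_of_isHomogeneous {σ R : Type*} [CommSemiring R]
    {g : MvPolynomial σ R} {m e : ℕ} (hmem : g ∈ idealOfVars σ R ^ m) (hg : g.IsHomogeneous e)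
    (hg0 : g ≠ 0) : m ≤ e := by
  obtain ⟨s, hs⟩ := exists_coeff_ne_zero hg0
  rw [hg.degree_eq_sum_deg_support (mem_support_iff.2 hs), ← Finsupp.degree_apply]
  exact (mem_pow_idealOfVars_iff m g).1 hmem s (mem_support_iff.2 hs)

lemma mem_idealOfVars_pow_of_isHomogeneous {σ R : Type*} [CommSemiring R]
    {g : MvPolynomial σ R} {m : ℕ} (hg : g.IsHomogeneous m) : g ∈ idealOfVars σ R ^ m :=
  (mem_pow_idealOfVars_iff m g).2 fun _ hs => (hg.degree_eq_sum_deg_support hs).le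

lemma exists_isHomogeneous_coeff_finSuccEquiv {R : Type*} [CommRing R] {n d j : ℕ}
    {F : MvPolynomial (Fin (n + 1)) R} (hF : F.IsHomogeneous d)
    (hj : (finSuccEquiv R n F).coeff j ≠ 0) :
    ∃ e, j + e = d ∧ ((finSuccEquiv R n F).coeff j).IsHomogeneous e := by
  have hF0 : F ≠ 0 := by rintro rfl; simp at hj
  have hjd := totalDegree_coeff_finSuccEquiv_add_le F j hj
  rw [hF.totalDegree hF0] at hjd
  exact ⟨d - j, by lia, hF.finSuccEquiv_coeff_isHomogeneous j (d - j) (by lia)⟩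

lemma finSuccEquiv_rename_succ {R : Type*} [CommSemiring R] {n : ℕ} (g : MvPolynomial (Fin n) R) :
    finSuccEquiv R n (rename Fin.succ g) = Polynomial.C g := by
  have hcomp : (finSuccEquiv R n).toAlgHom.comp (rename Fin.succ) =
      IsScalarTower.toAlgHom R _ _ := by
    ext1 i
    simp [finSuccEquiv_X_succ, Polynomial.algebraMap_eq]
  exact DFunLike.congr_fun hcomp g

lemma eq_of_degree_bounds {l b d j e : ℕ} (hl : 0 < l) (hje : j + e = d)
    (hd : d ≤ 2 * (l * b) - b) (he : l * b ≤ e) (hle : l * (l * b - j) ≤ e) :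
    d = 2 * (l * b) - b ∧ j = l * b - b ∧ e = l * b := by
  have hb : b ≤ l * b := Nat.le_mul_of_pos_left b hl
  obtain ⟨s, hs⟩ : ∃ s, l * b = j + b + s := ⟨l * b - b - j, by lia⟩
  have hmul : l * (l * b - j) = l * b + l * s := by rw [← mul_add]; congr 1; lia
  have hs0 : s = 0 := by
    obtain rfl | hl2 : l = 1 ∨ 2 ≤ l := by lia
    · lia
    · have hls : 2 * s ≤ l * s := Nat.mul_le_mul_right s hl2
      lia
  subst hs0
  lia

section ConePoints

variable {K : Type*} [Field K] {l : ℕ}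

/-- The form on `ℙ¹` of least degree vanishing at all the points `v i`. -/
noncomputable def pointsForm (v : Fin l → Fin 2 → K) : MvPolynomial (Fin 2) K :=
  ∏ i, pointForm (v i)

lemma isHomogeneous_pointsForm_pow (v : Fin l → Fin 2 → K) (b : ℕ) :
    (pointsForm v ^ b).IsHomogeneous (l * b) := by
  have hprod := IsHomogeneous.prod Finset.univ (fun i => pointForm (v i)) (fun _ => 1)
    fun i _ => isHomogeneous_pointForm (v i)
  simpa [pointsForm] using hprod.pow b

lemma pointsForm_ne_zero {v : Fin l → Fin 2 → K} (hv0 : ∀ i, v i ≠ 0) : pointsForm v ≠ 0 :=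
  Finset.prod_ne_zero_iff.2 fun i _ => pointForm_ne_zero (hv0 i)

lemma pointsForm_pow_dvd_iff {v : Fin l → Fin 2 → K}
    (hv : Pairwise fun i j => LinearIndependent K ![v i, v j]) {k : ℕ}
    {g : MvPolynomial (Fin 2) K} :
    pointsForm v ^ k ∣ g ↔ ∀ i, pointForm (v i) ^ k ∣ g := by
  rw [pointsForm, ← Finset.prod_pow]
  refine ⟨fun hg i => (Finset.dvd_prod_of_mem _ (Finset.mem_univ i)).trans hg, fun hg => ?_⟩
  exact Finset.prod_dvd_of_isRelPrime
    (fun i _ j _ hij => (isRelPrime_pointForm (hv hij)).pow) fun i _ => hg i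

/-- The points `(0 : v i)` of the line `X 0 = 0` in `ℙ²`, followed by the point `(1 : 0 : 0)`. -/
def conePoints (v : Fin l → Fin 2 → K) : Fin (l + 1) → Fin 3 → K :=
  Fin.snoc (fun i => Fin.cons 0 (v i)) (Pi.single 0 1)

lemma mem_fatPointIdeal_conePoints_iff {v : Fin l → Fin 2 → K} (hv0 : ∀ i, v i ≠ 0)
    (hv : Pairwise fun i j => LinearIndependent K ![v i, v j]) {m : ℕ}
    {F : MvPolynomial (Fin 3) K} :
    F ∈ fatPointIdeal (conePoints v) m ↔ ∀ j,
      (finSuccEquiv K 2 F).coeff j ∈ idealOfVars (Fin 2) K ^ m ∧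
      pointsForm v ^ (m - j) ∣ (finSuccEquiv K 2 F).coeff j := by
  simp only [fatPointIdeal, conePoints, Ideal.mem_iInf, Fin.forall_fin_succ', Fin.snoc_castSucc,
    Fin.snoc_last, mem_pointIdeal_single_zero_pow_iff, mem_pointIdeal_cons_zero_pow_iff,
    pointIdeal_eq_span_pointForm (hv0 _), Ideal.span_singleton_pow, Ideal.mem_span_singleton,
    pointsForm_pow_dvd_iff hv]
  exact ⟨fun hF j => ⟨hF.2 j, fun i => hF.1 i j⟩, fun hF => ⟨fun i j => (hF j).2 i,
    fun j => (hF j).1⟩⟩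

/-- The curve consisting of the line through the points `(0 : v i)`, with multiplicity
`l * b - b`, and the lines joining these points to `(1 : 0 : 0)`, with multiplicity `b`. -/
noncomputable def coneForm (v : Fin l → Fin 2 → K) (b : ℕ) : MvPolynomial (Fin 3) K :=
  X 0 ^ (l * b - b) * rename Fin.succ (pointsForm v ^ b)

lemma finSuccEquiv_coneForm (v : Fin l → Fin 2 → K) (b : ℕ) :
    finSuccEquiv K 2 (coneForm v b) = Polynomial.monomial (l * b - b) (pointsForm v ^ b) := by
  rw [coneForm, map_mul, map_pow, finSuccEquiv_X_zero, finSuccEquiv_rename_succ, mul_comm,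
    Polynomial.C_mul_X_pow_eq_monomial]

lemma isHomogeneous_coneForm (hl : 0 < l) (v : Fin l → Fin 2 → K) (b : ℕ) :
    (coneForm v b).IsHomogeneous (2 * (l * b) - b) := by
  have hb : b ≤ l * b := Nat.le_mul_of_pos_left b hl
  rw [show 2 * (l * b) - b = (l * b - b) + l * b by lia]
  exact (isHomogeneous_X_pow _ _).mul (isHomogeneous_pointsForm_pow v b).rename_isHomogeneous

lemma coneForm_ne_zero {v : Fin l → Fin 2 → K} (hv0 : ∀ i, v i ≠ 0) (b : ℕ) :
    coneForm v b ≠ 0 := by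
  rw [← map_ne_zero_iff _ (finSuccEquiv K 2).injective, finSuccEquiv_coneForm, Ne,
    Polynomial.monomial_eq_zero_iff]
  exact pow_ne_zero b (pointsForm_ne_zero hv0)

lemma coneForm_mem_fatPointIdeal (hl : 0 < l) {v : Fin l → Fin 2 → K} (hv0 : ∀ i, v i ≠ 0)
    (hv : Pairwise fun i j => LinearIndependent K ![v i, v j]) (b : ℕ) :
    coneForm v b ∈ fatPointIdeal (conePoints v) (l * b) := by
  rw [mem_fatPointIdeal_conePoints_iff hv0 hv, finSuccEquiv_coneForm]
  intro j
  rw [Polynomial.coeff_monomial]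
  split_ifs with hj
  · rw [← hj, Nat.sub_sub_self (Nat.le_mul_of_pos_left b hl)]
    exact ⟨mem_idealOfVars_pow_of_isHomogeneous (isHomogeneous_pointsForm_pow v b), dvd_rfl⟩
  · exact ⟨zero_mem _, dvd_zero _⟩

lemma degree_bounds_of_coeff_ne_zero {v : Fin l → Fin 2 → K} (hv0 : ∀ i, v i ≠ 0)
    (hv : Pairwise fun i j => LinearIndependent K ![v i, v j]) {m d j : ℕ}
    {F : MvPolynomial (Fin 3) K} (hmem : F ∈ fatPointIdeal (conePoints v) m)
    (hF : F.IsHomogeneous d) (hj : (finSuccEquiv K 2 F).coeff j ≠ 0) :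
    ∃ e, ((finSuccEquiv K 2 F).coeff j).IsHomogeneous e ∧ j + e = d ∧ m ≤ e ∧
      l * (m - j) ≤ e := by
  obtain ⟨e, hje, hcoeff⟩ := exists_isHomogeneous_coeff_finSuccEquiv hF hj
  obtain ⟨hvars, hdvd⟩ := (mem_fatPointIdeal_conePoints_iff hv0 hv).1 hmem j
  exact ⟨e, hcoeff, hje, le_of_mem_idealOfVars_pow_of_isHomogeneous hvars hcoeff hj,
    le_of_isHomogeneous_of_dvd (isHomogeneous_pointsForm_pow v _) hcoeff hj hdvd⟩

lemma eq_smul_coneForm (hl : 0 < l) {v : Fin l → Fin 2 → K} (hv0 : ∀ i, v i ≠ 0)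
    (hv : Pairwise fun i j => LinearIndependent K ![v i, v j]) {b d : ℕ}
    {F : MvPolynomial (Fin 3) K} (hmem : F ∈ fatPointIdeal (conePoints v) (l * b))
    (hF : F.IsHomogeneous d) (hF0 : F ≠ 0) (hd : d ≤ 2 * (l * b) - b) :
    d = 2 * (l * b) - b ∧ ∃ c : K, F = c • coneForm v b := by
  have hbounds (j : ℕ) (hj : (finSuccEquiv K 2 F).coeff j ≠ 0) :
      d = 2 * (l * b) - b ∧ j = l * b - b ∧
        ((finSuccEquiv K 2 F).coeff j).IsHomogeneous (l * b) := by
    obtain ⟨e, hcoeff, hje, hme, hle⟩ := degree_bounds_of_coeff_ne_zero hv0 hv hmem hF hj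
    obtain ⟨hd', hj', rfl⟩ := eq_of_degree_bounds hl hje hd hme hle
    exact ⟨hd', hj', hcoeff⟩
  obtain ⟨j, hj⟩ : ∃ j, (finSuccEquiv K 2 F).coeff j ≠ 0 := by
    contrapose! hF0
    exact (map_eq_zero_iff _ (finSuccEquiv K 2).injective).1 (Polynomial.ext hF0)
  obtain ⟨hd', rfl, hcoeff⟩ := hbounds j hj
  have hb : b ≤ l * b := Nat.le_mul_of_pos_left b hl
  have hdvd := ((mem_fatPointIdeal_conePoints_iff hv0 hv).1 hmem (l * b - b)).2
  rw [Nat.sub_sub_self hb] at hdvd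
  obtain ⟨c, hc⟩ := exists_eq_smul_of_isHomogeneous_of_dvd
    (isHomogeneous_pointsForm_pow v b) hcoeff hdvd
  refine ⟨hd', c, (finSuccEquiv K 2).injective (Polynomial.ext fun i => ?_)⟩
  rw [map_smul, finSuccEquiv_coneForm, Polynomial.coeff_smul, Polynomial.coeff_monomial]
  split_ifs with hi
  · rw [← hi, hc]
  · rw [smul_zero]
    by_contra hi'
    exact hi (hbounds i hi').2.1.symm

lemma hdim_fatPointIdeal_conePoints_of_lt (hl : 0 < l) {v : Fin l → Fin 2 → K}
    (hv0 : ∀ i, v i ≠ 0) (hv : Pairwise fun i j => LinearIndependent K ![v i, v j]) {b d : ℕ}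
    (hd : d < 2 * (l * b) - b) : hdim (fatPointIdeal (conePoints v) (l * b)) d = 0 := by
  have hbot : degComp (fatPointIdeal (conePoints v) (l * b)) d = ⊥ := by
    rw [Submodule.eq_bot_iff]
    rintro F ⟨hmem, hF⟩
    by_contra hF0
    exact hd.ne (eq_smul_coneForm hl hv0 hv hmem hF hF0 hd.le).1
  rw [hdim, hbot, finrank_bot]

lemma hdim_fatPointIdeal_conePoints (hl : 0 < l) {v : Fin l → Fin 2 → K}
    (hv0 : ∀ i, v i ≠ 0) (hv : Pairwise fun i j => LinearIndependent K ![v i, v j]) (b : ℕ) :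
    hdim (fatPointIdeal (conePoints v) (l * b)) (2 * (l * b) - b) = 1 := by
  have hspan : degComp (fatPointIdeal (conePoints v) (l * b)) (2 * (l * b) - b) =
      Submodule.span K {coneForm v b} := by
    refine le_antisymm ?_ ?_
    · rintro F ⟨hmem, hF⟩
      obtain rfl | hF0 := eq_or_ne F 0
      · exact zero_mem _
      · obtain ⟨-, c, hc⟩ := eq_smul_coneForm hl hv0 hv hmem hF hF0 le_rfl
        exact Submodule.mem_span_singleton.2 ⟨c, hc.symm⟩
    · rw [Submodule.span_singleton_le_iff_mem]
      exact ⟨coneForm_mem_fatPointIdeal hl hv0 hv b, isHomogeneous_coneForm hl v b⟩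
  rw [hdim, hspan, finrank_span_singleton (coneForm_ne_zero hv0 b)]

end ConePoints

lemma exists_linearEquiv_apply_eq_conePoints {K : Type*} [Field K] {l : ℕ}
    {p : Fin (l + 1) → Fin 3 → K} (hdist : ∀ i j, i ≠ j → ∀ c : K, c • p i ≠ p j)
    (f : Module.Dual K (Fin 3 → K)) (hon : ∀ i : Fin l, f (p i.castSucc) = 0)
    (hoff : f (p (Fin.last l)) ≠ 0) :
    ∃ (φ : (Fin 3 → K) ≃ₗ[K] (Fin 3 → K)) (v : Fin l → Fin 2 → K),
      (∀ i, φ (p i) = conePoints v i) ∧ (∀ i, v i ≠ 0) ∧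
      Pairwise fun i j => LinearIndependent K ![v i, v j] := by
  obtain ⟨φ, hφq, hφL⟩ := exists_linearEquiv_apply_eq_single_zero (n := 2) (by simp) f hoff
  let v (i : Fin l) : Fin 2 → K := Fin.tail (φ (p i.castSucc))
  have hφp (i : Fin l) : φ (p i.castSucc) = Fin.cons 0 (v i) := by
    rw [← hφL _ (hon i), Fin.cons_self_tail]
  have hv0 (i : Fin l) : v i ≠ 0 := fun hvi =>
    hdist (Fin.last l) i.castSucc (Fin.castSucc_ne_last i).symm 0 <| φ.injective <| by
      rw [zero_smul, map_zero, hφp, hvi]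
      exact Matrix.cons_zero_zero.symm
  refine ⟨φ, v, Fin.forall_fin_succ'.2 ⟨fun i => ?_, ?_⟩, hv0, fun i j hij => ?_⟩
  · rw [hφp, conePoints, Fin.snoc_castSucc]
  · rw [hφq, conePoints, Fin.snoc_last]
  · refine (LinearIndependent.pair_iff' (hv0 i)).2 fun c hc => ?_
    refine hdist i.castSucc j.castSucc (by simpa using hij) c (φ.injective ?_)
    rw [map_smul, hφp, hφp, ← hc]
    exact (Matrix.smul_cons c 0 (v i)).trans (by rw [smul_zero]; rfl)

theorem hdim_fatPointIdeal {K : Type*} [Field K] {l : ℕ} (hl : 0 < l)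
    {p : Fin (l + 1) → Fin 3 → K} (hdist : ∀ i j, i ≠ j → ∀ c : K, c • p i ≠ p j)
    (f : Module.Dual K (Fin 3 → K)) (hon : ∀ i : Fin l, f (p i.castSucc) = 0)
    (hoff : f (p (Fin.last l)) ≠ 0) (b : ℕ) :
    (∀ d < 2 * (l * b) - b, hdim (fatPointIdeal p (l * b)) d = 0) ∧
      hdim (fatPointIdeal p (l * b)) (2 * (l * b) - b) = 1 := by
  obtain ⟨φ, v, hφ, hv0, hv⟩ := exists_linearEquiv_apply_eq_conePoints hdist f hon hoff
  have hdim_eq (d : ℕ) : hdim (fatPointIdeal p (l * b)) d =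
      hdim (fatPointIdeal (conePoints v) (l * b)) d := by
    rw [← hdim_comap_linearChange φ, comap_linearChange_fatPointIdeal, funext hφ]
  simp only [hdim_eq]
  exact ⟨fun d hd => hdim_fatPointIdeal_conePoints_of_lt hl hv0 hv hd,
    hdim_fatPointIdeal_conePoints hl hv0 hv b⟩

end FatPoints

open FatPoints in
theorem stmt_0_general (K : Type*) [Field K] (l : ℕ) (hl : 0 < l)
    (p : Fin (l + 1) → Fin 3 → K) (hdist : ∀ i j, i ≠ j → ∀ c : K, c • p i ≠ p j)
    (L : Fin 3 → K) (hon : ∀ i : Fin (l + 1), (i : ℕ) < l → ∑ j, L j * p i j = 0)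
    (hoff : ∑ j, L j * p (Fin.last l) j ≠ 0)
    (P : Fin (l + 1) → Ideal (MvPolynomial (Fin 3) K))
    (hP : ∀ i F, F ∈ P i ↔ ∀ n, eval (p i) (homogeneousComponent n F) = 0)
    (m : ℕ) (hdvd : l ∣ m) (Im : Ideal (MvPolynomial (Fin 3) K)) (hIm : Im = ⨅ i, P i ^ m) :
    (∀ d, d < 2 * m - m / l → hdim Im d = 0) ∧
    hdim Im (2 * m - m / l) = 1 ∧
    sInf {d | hdim Im d ≠ 0} = 2 * m - m / l := by
  obtain ⟨b, rfl⟩ := hdvd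
  have hP' : P = fun i => pointIdeal (p i) :=
    funext fun i => Ideal.ext fun F => (hP i F).trans mem_pointIdeal_iff.symm
  obtain rfl : Im = fatPointIdeal p (l * b) := by rw [hIm, hP', fatPointIdeal]
  rw [Nat.mul_div_cancel_left b hl]
  obtain ⟨hlt, heq⟩ := hdim_fatPointIdeal hl hdist (dotProductEquiv K (Fin 3) L)
    (fun i => hon i.castSucc i.isLt) hoff b
  refine ⟨hlt, heq, IsLeast.csInf_eq ⟨heq.trans_ne one_ne_zero, fun d hd => ?_⟩⟩
  exact not_lt.1 fun hd' => hd (hlt d hd')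

theorem stmt_0 (K : Type*) [Field K] [CharZero K]
    -- `l > 2` points on a line plus one point off the line
    (l : ℕ) (hl : 2 < l)
    (p : Fin (l + 1) → Fin 3 → K) (hp0 : ∀ i, p i ≠ 0)
    (hdist : ∀ i j, i ≠ j → ∀ c : K, c • p i ≠ p j)
    (L : Fin 3 → K) (hL : L ≠ 0)
    (hon : ∀ i : Fin (l + 1), (i : ℕ) < l → ∑ j, L j * p i j = 0)
    (hoff : ∑ j, L j * p (Fin.last l) j ≠ 0)
    -- `P i` is the homogeneous prime ideal of all forms vanishing at `p i`
    (P : Fin (l + 1) → Ideal (MvPolynomial (Fin 3) K))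
    (hP : ∀ i F, F ∈ P i ↔ ∀ n, eval (p i) (homogeneousComponent n F) = 0)
    -- the uniform fat point ideal `I^{(m)} = P_1^m ∩ ⋯ ∩ P_{l+1}^m`
    (m : ℕ) (hm : 1 ≤ m) (hdvd : l * (l - 1) ∣ m)
    (Im : Ideal (MvPolynomial (Fin 3) K)) (hIm : Im = ⨅ i, P i ^ m) :
    (∀ d, d < 2 * m - m / l → hdim Im d = 0) ∧
    hdim Im (2 * m - m / l) = 1 ∧
    sInf {d | hdim Im d ≠ 0} = 2 * m - m / l :=
  stmt_0_general K l (by lia) p hdist L hon hoff P hP m ((Dvd.intro _ rfl).trans hdvd) Im hIm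
end

section
/- For every integer m ≥ 1 and every degree d ≥ lm, dim_K (I^{(m)})_d = C(d+2, 2) − (l+1)·C(m+1, 2), where C(n,2) = n(n−1)/2 denotes the binomial coefficient. -/
open MvPolynomial Filter

/-!
The argument works in `ℙⁿ` over any field. Write `P` for the ideal of a point `p` and `R` for the
polynomial ring.

If `A` is a form of degree `d - k` with `A(p) ≠ 0`, then `R_d = A · R_k ⊕ (P^(k+1))_d`. The sum is
direct because a nonzero form of degree `k` vanishes to order at most `k` at `p`, as seen on
`F(p + tx)`; it exhausts `R_d` for `A` a power of a linear form, hence for all `A` by dimension.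
So if `A` moreover lies in an ideal `Q`, intersecting `Q` with `P^(k+1)` lowers the dimension in
degree `d` by exactly `dim R_k`.

For the points at hand such forms exist: the `m`-th power of the hyperplane `L` separates the last
point from the others, and the product of the `m`-th powers of `l - 1` hyperplanes, each through the
last point and one other point of `L`, separates a point of `L` from the others.
-/

namespace FatPoint

variable {σ K : Type*} [Field K] {p : σ → K} {F A : MvPolynomial σ K} {d e k : ℕ}

/-- The homogeneous prime ideal of the projective point with coordinates `p`, defined as the ideal
generated by the forms vanishing at `p`. -/
noncomputable def pointIdeal (p : σ → K) : Ideal (MvPolynomial σ K) :=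
  Ideal.span {F | ∃ n, F.IsHomogeneous n ∧ eval p F = 0}

/-- The space of forms of degree `d` in an ideal; `degComp` is the case of three variables. -/
noncomputable def homogeneousPart (J : Ideal (MvPolynomial σ K)) (d : ℕ) :
    Submodule K (MvPolynomial σ K) :=
  J.restrictScalars K ⊓ homogeneousSubmodule σ K d

/-- The linear form with coefficient vector `v`. -/
noncomputable def linearForm [Fintype σ] (v : σ → K) : MvPolynomial σ K :=
  ∑ i, C (v i) * X i

/-- The substitution `F ↦ F(p + t x)`, with values in `K[x][t]`; the order of vanishing of `F` at
the point `x = p` of affine space is the largest power of `t` dividing the result. -/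
noncomputable def expandAt (p : σ → K) : MvPolynomial σ K →ₐ[K] Polynomial (MvPolynomial σ K) :=
  aeval fun i => Polynomial.C (C (p i)) + Polynomial.C (X i) * Polynomial.X

/-! ### The ideal of a point -/

lemma mem_pointIdeal_of_isHomogeneous (hF : F.IsHomogeneous d) (hFp : eval p F = 0) :
    F ∈ pointIdeal p :=
  Ideal.subset_span ⟨d, hF, hFp⟩

lemma eval_eq_zero_of_mem_pointIdeal (hF : F ∈ pointIdeal p) : eval p F = 0 := by
  have hle : pointIdeal p ≤ RingHom.ker (eval p) := Ideal.span_le.2 fun _ ⟨_, _, hG⟩ => hG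
  exact hle hF

lemma eq_pointIdeal {P : Ideal (MvPolynomial σ K)}
    (hP : ∀ F, F ∈ P ↔ ∀ n, eval p (homogeneousComponent n F) = 0) : P = pointIdeal p := by
  refine le_antisymm (fun F hF => ?_) (Ideal.span_le.2 ?_)
  · rw [← sum_homogeneousComponent F]
    exact Ideal.sum_mem _ fun n _ =>
      mem_pointIdeal_of_isHomogeneous (homogeneousComponent_isHomogeneous n F) ((hP F).1 hF n)
  · rintro F ⟨d, hF, hFp⟩
    refine (hP F).2 fun n => ?_
    rw [homogeneousComponent_of_mem hF]
    split_ifs <;> simp [hFp]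

/-! ### Order of vanishing at a point -/

lemma coeff_zero_expandAt (F : MvPolynomial σ K) : (expandAt p F).coeff 0 = C (eval p F) := by
  induction F using MvPolynomial.induction_on with
  | C a => simp [expandAt, MvPolynomial.algebraMap_eq, Polynomial.algebraMap_apply]
  | add F G hF hG => simp [hF, hG]
  | mul_X F i hF =>
    rw [map_mul, Polynomial.mul_coeff_zero, hF]
    simp [expandAt]

lemma X_pow_dvd_expandAt {m : ℕ} (hF : F ∈ pointIdeal p ^ m) : Polynomial.X ^ m ∣ expandAt p F := by
  have hle : pointIdeal p ≤ (Ideal.span {Polynomial.X}).comap (expandAt p) := fun G hG => by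
    rw [Ideal.mem_comap, Ideal.mem_span_singleton, Polynomial.X_dvd_iff, coeff_zero_expandAt,
      eval_eq_zero_of_mem_pointIdeal hG, C_0]
  have hF' := Ideal.le_comap_pow (expandAt p) m (Ideal.pow_right_mono hle m hF)
  rwa [Ideal.mem_comap, Ideal.span_singleton_pow, Ideal.mem_span_singleton] at hF'

lemma expandAt_of_isHomogeneous_one (hF : F.IsHomogeneous 1) :
    expandAt p F = Polynomial.C (C (eval p F)) + Polynomial.C F * Polynomial.X := by
  rw [← mem_homogeneousSubmodule, homogeneousSubmodule_one_eq_span_X] at hF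
  induction hF using Submodule.span_induction with
  | mem F hF =>
    obtain ⟨i, rfl⟩ := hF
    simp [expandAt]
  | zero => simp
  | add F G _ _ hF hG =>
    simp only [map_add, hF, hG]
    ring
  | smul a F _ hF =>
    rw [map_smul, hF, smul_eval, C_mul, ← smul_eq_C_mul, smul_add, ← Polynomial.smul_C,
      ← Polynomial.smul_C, smul_mul_assoc]

lemma natDegree_expandAt_le_and_coeff (hF : F.IsHomogeneous d) :
    (expandAt p F).natDegree ≤ d ∧ (expandAt p F).coeff d = F := by
  rw [← mem_homogeneousSubmodule, ← homogeneousSubmodule_one_pow] at hF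
  induction hF using Submodule.pow_induction_on_left' with
  | algebraMap a => simp [Polynomial.algebraMap_apply]
  | add F G d _ _ hF hG =>
    rw [map_add, Polynomial.coeff_add, hF.2, hG.2]
    exact ⟨Polynomial.natDegree_add_le_of_degree_le hF.1 hG.1, rfl⟩
  | mem_mul L hL d F _ hF =>
    have hL' : (expandAt p L).natDegree ≤ 1 ∧ (expandAt p L).coeff 1 = L := by
      rw [expandAt_of_isHomogeneous_one hL]
      exact ⟨by compute_degree, by simp [Polynomial.coeff_C]⟩
    rw [map_mul, Nat.succ_eq_one_add, Polynomial.coeff_mul_add_eq_of_natDegree_le hL'.1 hF.1,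
      hL'.2, hF.2]
    exact ⟨Polynomial.natDegree_mul_le_of_le hL'.1 hF.1, rfl⟩

lemma eq_zero_of_mul_mem_pointIdeal_pow (hAp : eval p A ≠ 0) (hF : F.IsHomogeneous k)
    (hAF : A * F ∈ pointIdeal p ^ (k + 1)) : F = 0 := by
  have hdvd : Polynomial.X ^ (k + 1) ∣ expandAt p A * expandAt p F := by
    rw [← map_mul]
    exact X_pow_dvd_expandAt hAF
  have hndvd : ¬ Polynomial.X ∣ expandAt p A := by
    rwa [Polynomial.X_dvd_iff, coeff_zero_expandAt, C_eq_zero]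
  have hF' := Polynomial.prime_X.pow_dvd_of_dvd_mul_left _ hndvd hdvd
  rw [← (natDegree_expandAt_le_and_coeff (p := p) hF).2]
  exact Polynomial.X_pow_dvd_iff.1 hF' k k.lt_succ_self

/-! ### Splitting off a power of the ideal of a point -/

lemma exists_sub_pow_mul_mem_pointIdeal_pow {L : MvPolynomial σ K} (hL : L.IsHomogeneous 1)
    (hLp : eval p L ≠ 0) (hF : F.IsHomogeneous d) (hed : e + k = d) :
    ∃ G : MvPolynomial σ K, G.IsHomogeneous k ∧ F - L ^ e * G ∈ pointIdeal p ^ (k + 1) := by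
  have hF' := hF
  rw [← mem_homogeneousSubmodule, ← homogeneousSubmodule_one_pow] at hF'
  clear hF
  induction hF' using Submodule.pow_induction_on_left' generalizing e k with
  | algebraMap a =>
    obtain ⟨rfl, rfl⟩ : e = 0 ∧ k = 0 := by omega
    exact ⟨C a, isHomogeneous_C σ a, by simp [MvPolynomial.algebraMap_eq]⟩
  | add F₁ F₂ d _ _ ih₁ ih₂ =>
    obtain ⟨G₁, hG₁, hF₁⟩ := ih₁ hed
    obtain ⟨G₂, hG₂, hF₂⟩ := ih₂ hed
    refine ⟨G₁ + G₂, hG₁.add hG₂, ?_⟩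
    convert! Ideal.add_mem _ hF₁ hF₂ using 1
    ring
  | mem_mul M hM d F hF ih =>
    rw [homogeneousSubmodule_one_pow] at hF
    obtain _ | e := e
    · obtain rfl : k = 1 + d := by omega
      exact ⟨M * F, hM.mul hF, by simp⟩
    -- Write `M = c L + y` with `y` vanishing at `p`, and apply the induction hypothesis with `k`
    -- to `L * F` and with `k - 1` to `y * F`.
    set c := eval p M / eval p L
    set y := M - C c * L with hy
    have hyhom : y.IsHomogeneous 1 := hM.sub (hL.C_mul c)
    have hyp : y ∈ pointIdeal p :=
      mem_pointIdeal_of_isHomogeneous hyhom (by simp [y, c, hLp])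
    obtain ⟨G, hG, hGF⟩ := ih (e := e) (k := k) (by omega)
    have hLF := Ideal.mul_mem_left _ (C c * L) hGF
    obtain _ | j := k
    · refine ⟨C c * G, hG.C_mul c, ?_⟩
      rw [zero_add, pow_one] at hLF ⊢
      convert! Ideal.add_mem _ hLF (Ideal.mul_mem_right F _ hyp) using 1
      rw [hy]
      ring
    · obtain ⟨H, hH, hHF⟩ := ih (e := e + 1) (k := j) (by omega)
      refine ⟨C c * G + y * H, (hG.C_mul c).add (add_comm 1 j ▸ hyhom.mul hH), ?_⟩
      have hyF : y * (F - L ^ (e + 1) * H) ∈ pointIdeal p ^ (j + 1 + 1) := by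
        rw [pow_succ']
        exact Ideal.mul_mem_mul hyp hHF
      convert! Ideal.add_mem _ hLF hyF using 1
      rw [hy]
      ring

/-! ### Dimensions of graded pieces -/

lemma homogeneousPart_inf (I J : Ideal (MvPolynomial σ K)) (d : ℕ) :
    homogeneousPart (I ⊓ J) d = homogeneousPart I d ⊓ homogeneousPart J d :=
  inf_inf_distrib_right (I.restrictScalars K) (J.restrictScalars K) _

lemma homogeneousPart_top (d : ℕ) :
    homogeneousPart (⊤ : Ideal (MvPolynomial σ K)) d = homogeneousSubmodule σ K d := by
  simp [homogeneousPart]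

instance [Finite σ] (d : ℕ) : FiniteDimensional K (homogeneousSubmodule σ K d) :=
  Module.Finite.iff_fg.2 (homogeneousSubmodule_fg σ K d)

instance [Finite σ] (J : Ideal (MvPolynomial σ K)) (d : ℕ) :
    FiniteDimensional K (homogeneousPart J d) :=
  Submodule.finiteDimensional_of_le inf_le_right

lemma map_mulLeft_homogeneousSubmodule_le {Q : Ideal (MvPolynomial σ K)} (hAQ : A ∈ Q)
    (hA : A.IsHomogeneous e) (hed : e + k = d) :
    (homogeneousSubmodule σ K k).map (LinearMap.mulLeft K A) ≤ homogeneousPart Q d := by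
  rintro _ ⟨F, hF, rfl⟩
  exact ⟨Q.mul_mem_right F hAQ, hed ▸ hA.mul hF⟩

lemma map_mulLeft_homogeneousSubmodule_le_homogeneousSubmodule (hA : A.IsHomogeneous e)
    (hed : e + k = d) :
    (homogeneousSubmodule σ K k).map (LinearMap.mulLeft K A) ≤ homogeneousSubmodule σ K d :=
  (map_mulLeft_homogeneousSubmodule_le (Q := ⊤) Submodule.mem_top hA hed).trans inf_le_right

lemma disjoint_map_mulLeft_homogeneousPart (hAp : eval p A ≠ 0) :
    Disjoint ((homogeneousSubmodule σ K k).map (LinearMap.mulLeft K A))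
      (homogeneousPart (pointIdeal p ^ (k + 1)) d) := by
  rw [Submodule.disjoint_def]
  rintro _ ⟨F, hF, rfl⟩ hAF
  simp [eq_zero_of_mul_mem_pointIdeal_pow hAp hF hAF.1]

lemma finrank_map_mulLeft_sup [Finite σ] (hAp : eval p A ≠ 0) :
    Module.finrank K ↥((homogeneousSubmodule σ K k).map (LinearMap.mulLeft K A) ⊔
      homogeneousPart (pointIdeal p ^ (k + 1)) d) =
        Module.finrank K (homogeneousSubmodule σ K k) +
          Module.finrank K (homogeneousPart (pointIdeal p ^ (k + 1)) d) := by
  have hA : A ≠ 0 := by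
    rintro rfl
    exact hAp (map_zero _)
  have hdim := Submodule.finrank_sup_add_finrank_inf_eq
    ((homogeneousSubmodule σ K k).map (LinearMap.mulLeft K A))
    (homogeneousPart (pointIdeal p ^ (k + 1)) d)
  rwa [(disjoint_map_mulLeft_homogeneousPart hAp).eq_bot, finrank_bot, add_zero,
    ← ((homogeneousSubmodule σ K k).equivMapOfInjective (LinearMap.mulLeft K A)
      (mul_right_injective₀ hA)).finrank_eq] at hdim

lemma finrank_homogeneousPart_pointIdeal_pow_add [Finite σ] (hp : p ≠ 0) (hkd : k ≤ d) :
    Module.finrank K (homogeneousPart (pointIdeal p ^ (k + 1)) d) +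
      Module.finrank K (homogeneousSubmodule σ K k) =
        Module.finrank K (homogeneousSubmodule σ K d) := by
  obtain ⟨e, rfl⟩ := Nat.exists_eq_add_of_le' hkd
  obtain ⟨i, hi : p i ≠ 0⟩ := Function.ne_iff.1 hp
  have hXp : eval p (X i ^ e) ≠ 0 := by
    rw [map_pow, eval_X]
    exact pow_ne_zero e hi
  have hsup : (homogeneousSubmodule σ K k).map (LinearMap.mulLeft K (X i ^ e)) ⊔
      homogeneousPart (pointIdeal p ^ (k + 1)) (e + k) = homogeneousSubmodule σ K (e + k) := by
    refine le_antisymm (sup_le ?_ inf_le_right) fun F hF => ?_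
    · exact map_mulLeft_homogeneousSubmodule_le_homogeneousSubmodule (isHomogeneous_X_pow i e) rfl
    · obtain ⟨G, hG, hFG⟩ := exists_sub_pow_mul_mem_pointIdeal_pow (isHomogeneous_X K i)
        (by rwa [eval_X]) hF rfl
      have hXG : (X i ^ e * G).IsHomogeneous (e + k) := (isHomogeneous_X_pow i e).mul hG
      exact Submodule.mem_sup.2 ⟨_, ⟨G, hG, rfl⟩, _, ⟨hFG, hF.sub hXG⟩, add_sub_cancel _ _⟩
  rw [← hsup, finrank_map_mulLeft_sup hXp, add_comm]

lemma map_mulLeft_sup_homogeneousPart_eq [Finite σ] (hp : p ≠ 0) (hA : A.IsHomogeneous e)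
    (hAp : eval p A ≠ 0) (hed : e + k = d) :
    (homogeneousSubmodule σ K k).map (LinearMap.mulLeft K A) ⊔
      homogeneousPart (pointIdeal p ^ (k + 1)) d = homogeneousSubmodule σ K d := by
  refine Submodule.eq_of_le_of_finrank_eq (sup_le ?_ inf_le_right) ?_
  · exact map_mulLeft_homogeneousSubmodule_le_homogeneousSubmodule hA hed
  · rw [finrank_map_mulLeft_sup hAp, add_comm,
      finrank_homogeneousPart_pointIdeal_pow_add hp (by omega)]

lemma exists_mem_isHomogeneous_of_le {Q : Ideal (MvPolynomial σ K)} (hp : p ≠ 0) (hAQ : A ∈ Q)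
    (hA : A.IsHomogeneous e) (hAp : eval p A ≠ 0) (hed : e ≤ d) :
    ∃ B ∈ Q, B.IsHomogeneous d ∧ eval p B ≠ 0 := by
  obtain ⟨k, rfl⟩ := Nat.exists_eq_add_of_le hed
  obtain ⟨i, hi : p i ≠ 0⟩ := Function.ne_iff.1 hp
  refine ⟨A * X i ^ k, Q.mul_mem_right _ hAQ, hA.mul (isHomogeneous_X_pow i k), ?_⟩
  rw [map_mul, map_pow, eval_X]
  exact mul_ne_zero hAp (pow_ne_zero k hi)

theorem finrank_homogeneousPart_inf_pointIdeal_pow_add [Finite σ] {Q : Ideal (MvPolynomial σ K)}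
    (hp : p ≠ 0) (hAQ : A ∈ Q) (hA : A.IsHomogeneous e) (hAp : eval p A ≠ 0) (hed : e + k ≤ d) :
    Module.finrank K (homogeneousPart (Q ⊓ pointIdeal p ^ (k + 1)) d) +
      Module.finrank K (homogeneousSubmodule σ K k) = Module.finrank K (homogeneousPart Q d) := by
  obtain ⟨B, hBQ, hB, hBp⟩ :=
    exists_mem_isHomogeneous_of_le hp hAQ hA hAp (show e ≤ d - k by omega)
  have hdk : d - k + k = d := by omega
  have hsup : homogeneousPart Q d ⊔ homogeneousPart (pointIdeal p ^ (k + 1)) d =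
      homogeneousSubmodule σ K d := by
    refine le_antisymm (sup_le inf_le_right inf_le_right) ?_
    rw [← map_mulLeft_sup_homogeneousPart_eq hp hB hBp hdk]
    exact sup_le_sup_right (map_mulLeft_homogeneousSubmodule_le hBQ hB hdk) _
  have hdim := Submodule.finrank_sup_add_finrank_inf_eq (homogeneousPart Q d)
    (homogeneousPart (pointIdeal p ^ (k + 1)) d)
  rw [hsup, ← homogeneousPart_inf] at hdim
  have := finrank_homogeneousPart_pointIdeal_pow_add hp (show k ≤ d by omega)
  omega

theorem finrank_homogeneousPart_iInf_pointIdeal_pow_add [Finite σ] {ι : Type*} (S : Finset ι)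
    {p : ι → σ → K} (hp : ∀ i ∈ S, p i ≠ 0) {k : ι → ℕ}
    (hsep : ∀ i ∈ S, ∃ (e : ℕ) (A : MvPolynomial σ K), A.IsHomogeneous e ∧ e + k i ≤ d ∧
      eval (p i) A ≠ 0 ∧ ∀ j ∈ S, j ≠ i → A ∈ pointIdeal (p j) ^ (k j + 1)) :
    Module.finrank K (homogeneousPart (⨅ i ∈ S, pointIdeal (p i) ^ (k i + 1)) d) +
      ∑ i ∈ S, Module.finrank K (homogeneousSubmodule σ K (k i)) =
        Module.finrank K (homogeneousSubmodule σ K d) := by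
  classical
  induction S using Finset.induction_on with
  | empty =>
    have hinf : ⨅ i ∈ (∅ : Finset ι), pointIdeal (p i) ^ (k i + 1) = ⊤ := by simp
    rw [hinf, homogeneousPart_top, Finset.sum_empty, add_zero]
  | insert i S hi ih =>
    obtain ⟨e, A, hA, hed, hAp, hAS⟩ := hsep i (Finset.mem_insert_self i S)
    have hAQ : A ∈ ⨅ j ∈ S, pointIdeal (p j) ^ (k j + 1) := by
      simp only [Submodule.mem_iInf]
      exact fun j hj => hAS j (Finset.mem_insert_of_mem hj) (ne_of_mem_of_not_mem hj hi)
    have hstep := finrank_homogeneousPart_inf_pointIdeal_pow_add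
      (hp i (Finset.mem_insert_self i S)) hAQ hA hAp hed
    have hS := ih (fun j hj => hp j (Finset.mem_insert_of_mem hj)) fun j hj => by
      obtain ⟨e, A, hA, hed, hAp, hAS⟩ := hsep j (Finset.mem_insert_of_mem hj)
      exact ⟨e, A, hA, hed, hAp, fun j' hj' => hAS j' (Finset.mem_insert_of_mem hj')⟩
    rw [Finset.iInf_insert, Finset.sum_insert hi, inf_comm]
    omega

lemma finrank_homogeneousSubmodule (n d : ℕ) :
    Module.finrank K (homogeneousSubmodule (Fin (n + 1)) K d) = (d + n).choose n := by
  have hcard : Nat.card {s : Fin (n + 1) →₀ ℕ | s.degree = d} = (d + n).choose n := by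
    refine (Nat.card_congr (Sym.equivNatSum (Fin (n + 1)) d)).symm.trans ?_
    rw [Nat.card_eq_fintype_card, Sym.card_sym_eq_choose, Fintype.card_fin,
      show n + 1 + d - 1 = d + n by omega, Nat.choose_symm_add]
  rw [homogeneousSubmodule_eq_finsupp_supported, ← hcard]
  exact Module.finrank_eq_nat_card_basis (basisRestrictSupport K _)

/-! ### Separating forms -/

section SeparatingForms

variable [Fintype σ] {q r v : σ → K}

lemma isHomogeneous_linearForm (v : σ → K) : (linearForm v).IsHomogeneous 1 :=
  IsHomogeneous.sum _ _ _ fun _ _ => isHomogeneous_C_mul_X _ _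

lemma eval_linearForm (v p : σ → K) : eval p (linearForm v) = v ⬝ᵥ p := by
  simp [linearForm, dotProduct]

lemma linearForm_pow_mem_pointIdeal_pow (h : v ⬝ᵥ p = 0) (m : ℕ) :
    linearForm v ^ m ∈ pointIdeal p ^ m :=
  Ideal.pow_mem_pow (mem_pointIdeal_of_isHomogeneous (isHomogeneous_linearForm v)
    ((eval_linearForm v p).trans h)) m

lemma notMem_span_pair_of_dotProduct {L : σ → K} (hp : L ⬝ᵥ p = 0) (hq : L ⬝ᵥ q = 0)
    (hr : L ⬝ᵥ r ≠ 0) (hpq : ∀ c : K, c • q ≠ p) : p ∉ Submodule.span K {q, r} := by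
  rw [Submodule.mem_span_pair]
  rintro ⟨a, b, rfl⟩
  obtain rfl : b = 0 := by simpa [dotProduct_add, hq, hr] using hp
  exact hpq a (by simp)

lemma exists_dotProduct_of_notMem_span {s : Set (σ → K)} (hp : p ∉ Submodule.span K s) :
    ∃ v : σ → K, v ⬝ᵥ p ≠ 0 ∧ ∀ q ∈ s, v ⬝ᵥ q = 0 := by
  classical
  obtain ⟨f, hfp, hfs⟩ := Submodule.exists_le_ker_of_notMem hp
  obtain ⟨v, rfl⟩ := (dotProductEquiv K σ).surjective f
  exact ⟨v, hfp, fun q hq => hfs (Submodule.subset_span hq)⟩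

lemma exists_form_separating_of_hyperplane {ι : Type*} {T : Finset ι} (hT : T.Nonempty)
    {q : ι → σ → K} {L : σ → K} (hp : L ⬝ᵥ p = 0) (hq : ∀ j ∈ T, L ⬝ᵥ q j = 0)
    (hr : L ⬝ᵥ r ≠ 0) (hpq : ∀ j ∈ T, ∀ c : K, c • q j ≠ p) (m : ℕ) :
    ∃ A : MvPolynomial σ K, A.IsHomogeneous (T.card * m) ∧ eval p A ≠ 0 ∧
      A ∈ pointIdeal r ^ m ∧ ∀ j ∈ T, A ∈ pointIdeal (q j) ^ m := by
  have hv : ∀ j, ∃ v : σ → K, j ∈ T → v ⬝ᵥ p ≠ 0 ∧ v ⬝ᵥ q j = 0 ∧ v ⬝ᵥ r = 0 := fun j => by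
    by_cases hj : j ∈ T
    · obtain ⟨v, hvp, hv⟩ := exists_dotProduct_of_notMem_span
        (notMem_span_pair_of_dotProduct hp (hq j hj) hr (hpq j hj))
      exact ⟨v, fun _ => ⟨hvp, hv _ (by simp), hv _ (by simp)⟩⟩
    · exact ⟨0, fun h => absurd h hj⟩
  choose v hv using hv
  have hdvd : ∀ j ∈ T, linearForm (v j) ^ m ∣ ∏ j ∈ T, linearForm (v j) ^ m := fun _ hj =>
    Finset.dvd_prod_of_mem _ hj
  refine ⟨∏ j ∈ T, linearForm (v j) ^ m, ?_, ?_, ?_, fun j hj => ?_⟩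
  · have hhom := IsHomogeneous.prod T (fun j => linearForm (v j) ^ m) (fun _ => 1 * m)
      fun j _ => (isHomogeneous_linearForm (v j)).pow m
    rwa [Finset.sum_const, smul_eq_mul, one_mul] at hhom
  · simp only [map_prod, map_pow, eval_linearForm]
    exact Finset.prod_ne_zero_iff.2 fun j hj => pow_ne_zero m (hv j hj).1
  · obtain ⟨j, hj⟩ := hT
    exact Ideal.mem_of_dvd _ (hdvd j hj) (linearForm_pow_mem_pointIdeal_pow (hv j hj).2.2 m)
  · exact Ideal.mem_of_dvd _ (hdvd j hj) (linearForm_pow_mem_pointIdeal_pow (hv j hj).2.1 m)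

lemma exists_form_separating {l m : ℕ} (hl : 2 ≤ l) {p : Fin (l + 1) → σ → K}
    (hdist : ∀ i j, i ≠ j → ∀ c : K, c • p i ≠ p j) {L : σ → K}
    (hon : ∀ i : Fin (l + 1), (i : ℕ) < l → L ⬝ᵥ p i = 0) (hoff : L ⬝ᵥ p (Fin.last l) ≠ 0)
    (i : Fin (l + 1)) :
    ∃ (e : ℕ) (A : MvPolynomial σ K), A.IsHomogeneous e ∧ e + m ≤ l * m ∧
      eval (p i) A ≠ 0 ∧ ∀ j, j ≠ i → A ∈ pointIdeal (p j) ^ m := by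
  by_cases hi : i = Fin.last l
  · subst hi
    refine ⟨1 * m, linearForm L ^ m, (isHomogeneous_linearForm L).pow m, by nlinarith, ?_, ?_⟩
    · rw [map_pow, eval_linearForm]
      exact pow_ne_zero m hoff
    · exact fun j hj => linearForm_pow_mem_pointIdeal_pow (hon j (Fin.val_lt_last hj)) m
  · set T := (Finset.univ.erase (Fin.last l)).erase i
    have hcard : T.card = l - 1 := by simp [T, Finset.card_erase_of_mem, hi]
    have hlast : ∀ j ∈ T, j ≠ Fin.last l := fun j hj =>
      Finset.ne_of_mem_erase (Finset.mem_of_mem_erase hj)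
    obtain ⟨A, hA, hAp, hAlast, hAT⟩ := exists_form_separating_of_hyperplane
      (T := T) (q := p) (Finset.card_pos.1 (by omega)) (hon i (Fin.val_lt_last hi))
      (fun j hj => hon j (Fin.val_lt_last (hlast j hj))) hoff
      (fun j hj => hdist j i (Finset.ne_of_mem_erase hj)) m
    refine ⟨_, A, hA, ?_, hAp, fun j hj => ?_⟩
    · rw [hcard, ← Nat.succ_mul, Nat.succ_eq_add_one, Nat.sub_add_cancel (by omega)]
    · by_cases hjl : j = Fin.last l
      · exact hjl ▸ hAlast
      · exact hAT j (by simp [T, hj, hjl])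

end SeparatingForms

end FatPoint

theorem stmt_1_general {K : Type*} [Field K] {n l : ℕ} (hl : 2 ≤ l)
    (p : Fin (l + 1) → Fin (n + 1) → K) (hp0 : ∀ i, p i ≠ 0)
    (hdist : ∀ i j, i ≠ j → ∀ c : K, c • p i ≠ p j)
    (L : Fin (n + 1) → K) (hon : ∀ i : Fin (l + 1), (i : ℕ) < l → ∑ j, L j * p i j = 0)
    (hoff : ∑ j, L j * p (Fin.last l) j ≠ 0)
    (P : Fin (l + 1) → Ideal (MvPolynomial (Fin (n + 1)) K))
    (hP : ∀ i F, F ∈ P i ↔ ∀ n, eval (p i) (homogeneousComponent n F) = 0)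
    {m : ℕ} (hm : 1 ≤ m) {d : ℕ} (hd : l * m ≤ d + 1) :
    (Module.finrank K (FatPoint.homogeneousPart (⨅ i, P i ^ m) d) : ℤ) =
      (d + n).choose n - (l + 1) * (m + n - 1).choose n := by
  obtain rfl : P = fun i => FatPoint.pointIdeal (p i) :=
    funext fun i => FatPoint.eq_pointIdeal (hP i)
  obtain ⟨k, rfl⟩ : ∃ k, m = k + 1 := ⟨m - 1, by omega⟩
  have hdim := FatPoint.finrank_homogeneousPart_iInf_pointIdeal_pow_add (d := d) Finset.univ
    (fun i _ => hp0 i) (k := fun _ => k) fun i _ => by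
      obtain ⟨e, A, hA, he, hAp, hAj⟩ :=
        FatPoint.exists_form_separating (m := k + 1) hl hdist hon hoff i
      exact ⟨e, A, hA, by omega, hAp, fun j _ => hAj j⟩
  simp_rw [Finset.sum_const, Finset.card_univ, Fintype.card_fin, smul_eq_mul,
    FatPoint.finrank_homogeneousSubmodule] at hdim
  have hinf : ⨅ i ∈ Finset.univ, FatPoint.pointIdeal (p i) ^ (k + 1) =
      ⨅ i, FatPoint.pointIdeal (p i) ^ (k + 1) := by simp
  rw [hinf] at hdim
  rw [← hdim, show k + 1 + n - 1 = k + n by omega]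
  push_cast
  ring

theorem stmt_1
    (K : Type*) [Field K] [CharZero K]
    -- `l > 2` points on a line plus one point off the line
    (l : ℕ) (hl : 2 < l)
    (p : Fin (l + 1) → Fin 3 → K) (hp0 : ∀ i, p i ≠ 0)
    (hdist : ∀ i j, i ≠ j → ∀ c : K, c • p i ≠ p j)
    (L : Fin 3 → K) (hL : L ≠ 0)
    (hon : ∀ i : Fin (l + 1), (i : ℕ) < l → ∑ j, L j * p i j = 0)
    (hoff : ∑ j, L j * p (Fin.last l) j ≠ 0)
    -- `P i` is the homogeneous prime ideal of all forms vanishing at `p i`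
    (P : Fin (l + 1) → Ideal (MvPolynomial (Fin 3) K))
    (hP : ∀ i F, F ∈ P i ↔ ∀ n, eval (p i) (homogeneousComponent n F) = 0)
    -- the uniform fat point ideal `I^{(m)} = P_1^m ∩ ⋯ ∩ P_{l+1}^m`
    (m : ℕ) (hm : 1 ≤ m)
    (Im : Ideal (MvPolynomial (Fin 3) K)) (hIm : Im = ⨅ i, P i ^ m) :
    ∀ d : ℕ, l * m ≤ d →
      (hdim Im d : ℤ) = (d + 2).choose 2 - (l + 1) * (m + 1).choose 2 := by
  subst hIm
  exact fun d hd => stmt_1_general hl.le p hp0 hdist L hon hoff P hP hm (Nat.le_succ_of_le hd)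
end

section
/- For every integer m ≥ 1 and every degree d with 2m ≤ d < lm, setting q = ⌈(lm − d)/(l − 1)⌉, one has dim_K (I^{(m)})_d = [ (d−q)² + 3(d−q) − l·((m−q)² + (m−q)) − (m² + m) ] / 2 + 1. -/
open MvPolynomial Filter

/-!
Take coordinates in which the isolated point is `(1 : 0 : 0)` and `L` is the line `x = 0`, and write
a form of degree `d` as `F = ∑ j, f_j x ^ j`, where `f_j` is a binary form of degree `d - j`. Then
`F` vanishes to order `m` at `(0 : u)` exactly when `f_j` is divisible by the `(m - j)`-th power of
the linear form of `u`, and it vanishes to order `m` at `(1 : 0 : 0)` exactly when `f_j = 0`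
whenever `d - j < m`. The slices are independent of each other, so the dimension is
`∑ j ≤ d - m, max 0 (d - j + 1 - l * max 0 (m - j))`. As `l (m - j) ≤ d - j` amounts to `q ≤ j` for
`j ≤ m`, the outer maximum is `0` exactly for `j < q`, and the rest is two arithmetic progressions.
-/

section General

lemma comap_pow_of_ringEquiv {A B : Type*} [CommSemiring A] [CommSemiring B] (e : A ≃+* B)
    (I : Ideal B) (m : ℕ) : (I ^ m).comap e = I.comap e ^ m := by
  simp only [← Ideal.map_symm, Ideal.map_pow]

/-- The ideal `I.comap constantCoeff` is generated by `I` and the variable. -/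
lemma mem_comap_constantCoeff_pow_iff {S : Type*} [CommSemiring S] {I : Ideal S} {m : ℕ}
    {f : Polynomial S} :
    f ∈ I.comap Polynomial.constantCoeff ^ m ↔ ∀ j, f.coeff j ∈ I ^ (m - j) := by
  constructor
  · induction m generalizing f with
    | zero => simp
    | succ m ih =>
      intro hf
      rw [pow_succ] at hf
      refine Submodule.mul_induction_on hf (fun g hg h hh j ↦ ?_)
        fun g h hg hh j ↦ Polynomial.coeff_add g h j ▸ add_mem (hg j) (hh j)
      rw [Polynomial.coeff_mul]
      refine sum_mem fun ⟨a, b⟩ hab ↦ ?_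
      rw [Finset.HasAntidiagonal.mem_antidiagonal] at hab
      rcases b with _ | b
      · have hmul := Ideal.mul_mem_mul (ih hg a) hh
        rw [← pow_succ] at hmul
        exact Ideal.pow_le_pow_right (by lia) hmul
      · exact Ideal.mul_mem_right _ _ (Ideal.pow_le_pow_right (by lia) (ih hg a))
  · intro hf
    rw [f.as_sum_range_C_mul_X_pow]
    refine sum_mem fun j _ ↦ ?_
    have hC : Polynomial.C (f.coeff j) ∈ I.comap Polynomial.constantCoeff ^ (m - j) := by
      have hle : I.map Polynomial.C ≤ I.comap Polynomial.constantCoeff :=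
        Ideal.map_le_iff_le_comap.mpr fun a ha ↦ by simpa using ha
      refine Ideal.pow_right_mono hle _ ?_
      rw [← Ideal.map_pow]
      exact Ideal.mem_map_of_mem _ (hf j)
    have hX : (Polynomial.X : Polynomial S) ^ j ∈ I.comap Polynomial.constantCoeff ^ j :=
      Ideal.pow_mem_pow (by simp) j
    have hmul := Ideal.mul_mem_mul hC hX
    rw [← pow_add] at hmul
    exact Ideal.pow_le_pow_right (by lia) hmul

end General

section PointIdeal

variable {σ R : Type*} [CommRing R]

/-- The restriction `F ↦ F(T v)` of a polynomial to the line through the origin spanned by `v`.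
For `v ≠ 0` this line is the projective point with homogeneous coordinates `v`. -/
noncomputable def lineRestriction (v : σ → R) : MvPolynomial σ R →ₐ[R] Polynomial R :=
  aeval fun i ↦ Polynomial.C (v i) * Polynomial.X

lemma coeff_lineRestriction (v : σ → R) (F : MvPolynomial σ R) (n : ℕ) :
    (lineRestriction v F).coeff n = eval v (homogeneousComponent n F) := by
  induction F using MvPolynomial.induction_on' with
  | add F G hF hG => simp only [map_add, Polynomial.coeff_add, hF, hG]
  | monomial s a =>
    have hline : lineRestriction v (monomial s a) =
        Polynomial.C (eval v (monomial s a)) * Polynomial.X ^ s.degree := by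
      simp only [lineRestriction, aeval_monomial, eval_monomial, Finsupp.prod, mul_pow,
        Finset.prod_mul_distrib, Finset.prod_pow_eq_pow_sum, Finsupp.degree, map_mul, map_prod,
        map_pow, mul_assoc, Polynomial.algebraMap_eq]
      rfl
    rw [hline, Polynomial.coeff_C_mul_X_pow,
      homogeneousComponent_of_mem (isHomogeneous_monomial a rfl)]
    split_ifs <;> simp

/-- The homogeneous ideal of the projective point with homogeneous coordinates `v`, encoded as the
ideal of the polynomials vanishing on the whole line spanned by `v`. -/
noncomputable def pointIdeal (v : σ → R) : Ideal (MvPolynomial σ R) :=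
  RingHom.ker (lineRestriction v)

lemma mem_pointIdeal_iff {v : σ → R} {F : MvPolynomial σ R} :
    F ∈ pointIdeal v ↔ ∀ n, eval v (homogeneousComponent n F) = 0 := by
  simp only [pointIdeal, RingHom.mem_ker, Polynomial.ext_iff, coeff_lineRestriction,
    Polynomial.coeff_zero]

instance [IsDomain R] (v : σ → R) : (pointIdeal v).IsPrime :=
  RingHom.ker_isPrime _

lemma lineRestriction_cons_zero {n : ℕ} (u : Fin n → R) (F : MvPolynomial (Fin (n + 1)) R) :
    lineRestriction (Fin.cons 0 u : Fin (n + 1) → R) F =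
      lineRestriction u ((finSuccEquiv R n F).coeff 0) := by
  induction F using MvPolynomial.induction_on with
  | C a => simp [lineRestriction, finSuccEquiv_apply]
  | add F G hF hG => simp only [map_add, Polynomial.coeff_add, hF, hG]
  | mul_X F i hF =>
    rw [map_mul, map_mul, Polynomial.mul_coeff_zero, map_mul, hF]
    cases i using Fin.cases <;> simp [lineRestriction, finSuccEquiv_X_zero, finSuccEquiv_X_succ]

lemma lineRestriction_single_zero {n : ℕ} (F : MvPolynomial (Fin (n + 1)) R) :
    lineRestriction (Pi.single 0 1) F = (finSuccEquiv R n F).map constantCoeff := by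
  induction F using MvPolynomial.induction_on with
  | C a => simp [lineRestriction, finSuccEquiv_apply]
  | add F G hF hG => simp only [map_add, Polynomial.map_add, hF, hG]
  | mul_X F i hF =>
    rw [map_mul, map_mul, Polynomial.map_mul, hF]
    cases i using Fin.cases <;> simp [lineRestriction, finSuccEquiv_X_zero, finSuccEquiv_X_succ]

lemma mem_pointIdeal_cons_zero_pow_iff {n m : ℕ} {u : Fin n → R}
    {F : MvPolynomial (Fin (n + 1)) R} :
    F ∈ pointIdeal (Fin.cons 0 u : Fin (n + 1) → R) ^ m ↔
      ∀ j, (finSuccEquiv R n F).coeff j ∈ pointIdeal u ^ (m - j) := by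
  have hcomap : pointIdeal (Fin.cons 0 u : Fin (n + 1) → R) =
      ((pointIdeal u).comap Polynomial.constantCoeff).comap (finSuccEquiv R n).toRingEquiv := by
    ext F
    simp [pointIdeal, RingHom.mem_ker, lineRestriction_cons_zero]
  rw [hcomap, ← comap_pow_of_ringEquiv, Ideal.mem_comap]
  exact mem_comap_constantCoeff_pow_iff

lemma mem_pointIdeal_single_zero_pow_iff {n m : ℕ} {F : MvPolynomial (Fin (n + 1)) R} :
    F ∈ pointIdeal (Pi.single 0 1 : Fin (n + 1) → R) ^ m ↔
      ∀ j, (finSuccEquiv R n F).coeff j ∈ idealOfVars (Fin n) R ^ m := by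
  have hcomap : pointIdeal (Pi.single 0 1 : Fin (n + 1) → R) =
      ((idealOfVars (Fin n) R).map Polynomial.C).comap (finSuccEquiv R n).toRingEquiv := by
    ext F
    have hvars (f : MvPolynomial (Fin n) R) : f ∈ idealOfVars (Fin n) R ↔ constantCoeff f = 0 := by
      rw [← pow_one (idealOfVars _ _), mem_pow_idealOfVars_iff']
      simp [Finsupp.degree_eq_zero_iff, constantCoeff_eq]
    simp [pointIdeal, RingHom.mem_ker, lineRestriction_single_zero, Ideal.mem_map_C_iff,
      Polynomial.ext_iff, hvars]
  rw [hcomap, ← comap_pow_of_ringEquiv, Ideal.mem_comap, ← Ideal.map_pow, Ideal.mem_map_C_iff]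
  rfl

end PointIdeal

section GradedPart

variable {σ R : Type*} [CommRing R]

/-- The degree-`d` homogeneous part of an ideal `J`, as a module over the coefficients. It is
`degComp` for arbitrary variables and coefficients. -/
noncomputable def gradedPart (J : Ideal (MvPolynomial σ R)) (d : ℕ) :
    Submodule R (MvPolynomial σ R) :=
  J.restrictScalars R ⊓ homogeneousSubmodule σ R d

lemma mem_gradedPart {J : Ideal (MvPolynomial σ R)} {d : ℕ} {F : MvPolynomial σ R} :
    F ∈ gradedPart J d ↔ F ∈ J ∧ F.IsHomogeneous d :=
  Iff.rfl

lemma finrank_homogeneousSubmodule [Fintype σ] [Nontrivial R] (d : ℕ) :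
    Module.finrank R (homogeneousSubmodule σ R d) = (Fintype.card σ).multichoose d := by
  classical
  let e : Sym σ d ≃ {s : σ →₀ ℕ | s.degree = d} := Sym.equivNatSum σ d
  have := Fintype.ofEquiv _ e
  rw [homogeneousSubmodule_eq_finsupp_supported,
    (AddMonoidAlgebra.supportedEquivFinsupp _).finrank_eq, Module.finrank_finsupp_self,
    ← Fintype.card_congr e, Sym.card_sym_eq_multichoose]

lemma gradedPart_idealOfVars_pow_inf_of_le {m e : ℕ} (h : m ≤ e) (J : Ideal (MvPolynomial σ R)) :
    gradedPart (idealOfVars σ R ^ m ⊓ J) e = gradedPart J e := by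
  ext F
  simp only [mem_gradedPart, Ideal.mem_inf, and_assoc, and_iff_right_iff_imp]
  rintro ⟨-, hF⟩
  exact (mem_pow_idealOfVars_iff' m F).mpr fun s hs ↦ hF.coeff_eq_zero (by lia)

lemma gradedPart_idealOfVars_pow_inf_of_lt {m e : ℕ} (h : e < m) (J : Ideal (MvPolynomial σ R)) :
    gradedPart (idealOfVars σ R ^ m ⊓ J) e = ⊥ := by
  refine (Submodule.eq_bot_iff _).mpr fun F ⟨⟨hm, _⟩, hF⟩ ↦ MvPolynomial.ext _ _ fun s ↦ ?_
  by_cases hs : s.degree = e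
  · exact (mem_pow_idealOfVars_iff' m F).mp hm s (by lia)
  · exact hF.coeff_eq_zero hs

lemma homogeneousComponent_mul_of_isHomogeneous {G : MvPolynomial σ R} {k : ℕ}
    (hG : G.IsHomogeneous k) (H : MvPolynomial σ R) (e : ℕ) :
    homogeneousComponent e (G * H) = if k ≤ e then G * homogeneousComponent (e - k) H else 0 := by
  let := MvPolynomial.gradedAlgebra (σ := σ) (R := R)
  have hdec (n : ℕ) (F : MvPolynomial σ R) :
      homogeneousComponent n F = DirectSum.decompose (homogeneousSubmodule σ R) F n :=
    (decomposition.decompose'_apply F n).symm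
  simp only [hdec]
  exact DirectSum.coe_decompose_mul_of_left_mem (homogeneousSubmodule σ R) e
    ((mem_homogeneousSubmodule k G).mpr hG)

lemma finrank_gradedPart_span_singleton_of_le [IsDomain R] {G : MvPolynomial σ R} {k e : ℕ}
    (hG : G.IsHomogeneous k) (hG0 : G ≠ 0) (hke : k ≤ e) :
    Module.finrank R (gradedPart (Ideal.span {G}) e) =
      Module.finrank R (homogeneousSubmodule σ R (e - k)) := by
  have hmap : gradedPart (Ideal.span {G}) e =
      (homogeneousSubmodule σ R (e - k)).map (LinearMap.mulLeft R G) := by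
    apply le_antisymm
    · rintro F ⟨hGF, hF⟩
      obtain ⟨H, rfl⟩ := Ideal.mem_span_singleton.mp hGF
      refine ⟨homogeneousComponent (e - k) H, homogeneousComponent_isHomogeneous _ _, ?_⟩
      rw [← homogeneousComponent_eq_self hF, homogeneousComponent_mul_of_isHomogeneous hG,
        if_pos hke, LinearMap.mulLeft_apply]
    · rintro _ ⟨H, hH, rfl⟩
      refine mem_gradedPart.mpr ⟨Ideal.mem_span_singleton.mpr (dvd_mul_right G H), ?_⟩
      simpa [Nat.add_sub_of_le hke] using hG.mul hH
  rw [hmap]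
  exact (Submodule.equivMapOfInjective _ (mul_right_injective₀ hG0) _).finrank_eq.symm

lemma gradedPart_span_singleton_of_lt {G : MvPolynomial σ R} {k e : ℕ} (hG : G.IsHomogeneous k)
    (hek : e < k) : gradedPart (Ideal.span {G}) e = ⊥ := by
  refine (Submodule.eq_bot_iff _).mpr fun F ⟨hGF, hF⟩ ↦ ?_
  obtain ⟨H, rfl⟩ := Ideal.mem_span_singleton.mp hGF
  rw [← homogeneousComponent_eq_self hF, homogeneousComponent_mul_of_isHomogeneous hG,
    if_neg hek.not_ge]

end GradedPart

section Slices

variable {R K : Type*} [CommRing R] [Field K] {n : ℕ}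

lemma isHomogeneous_iff_coeff_finSuccEquiv {d : ℕ} {F : MvPolynomial (Fin (n + 1)) R} :
    F.IsHomogeneous d ↔ (∀ j ≤ d, ((finSuccEquiv R n F).coeff j).IsHomogeneous (d - j)) ∧
      ∀ j, d < j → (finSuccEquiv R n F).coeff j = 0 := by
  have degree_cons (j : ℕ) (s : Fin n →₀ ℕ) : (s.cons j).degree = j + s.degree := by
    simp [Finsupp.degree_eq_sum, Fin.sum_univ_succ]
  constructor
  · refine fun hF ↦ ⟨fun j hj ↦ hF.finSuccEquiv_coeff_isHomogeneous j _ (by lia), fun j hj ↦ ?_⟩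
    ext s
    rw [finSuccEquiv_coeff_coeff, coeff_zero]
    exact hF.coeff_eq_zero (by rw [degree_cons]; lia)
  · rintro ⟨hle, hlt⟩ s hs
    rw [← s.cons_tail, ← finSuccEquiv_coeff_coeff] at hs
    have hsd : s 0 ≤ d := by
      by_contra! h
      simp [hlt _ h] at hs
    have htail : s.tail.degree = d - s 0 := not_imp_comm.mp (hle _ hsd).coeff_eq_zero hs
    have hdeg : s.degree = d := by
      rw [← s.cons_tail, degree_cons, htail, Nat.add_sub_of_le hsd]
    rwa [Finsupp.degree_eq_weight_one] at hdeg

lemma exists_mem_gradedPart_coeff_finSuccEquiv_eq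
    {J : Ideal (MvPolynomial (Fin (n + 1)) R)} {I : ℕ → Ideal (MvPolynomial (Fin n) R)}
    (hJ : ∀ F, F ∈ J ↔ ∀ j, (finSuccEquiv R n F).coeff j ∈ I j) {d : ℕ}
    (g : Π j : Fin (d + 1), gradedPart (I j) (d - j)) :
    ∃ F ∈ gradedPart J d, ∀ j : Fin (d + 1), (finSuccEquiv R n F).coeff j = g j := by
  let F := (finSuccEquiv R n).symm (∑ j : Fin (d + 1), Polynomial.monomial j (g j).1)
  have hF_le (j : Fin (d + 1)) : (finSuccEquiv R n F).coeff j = g j := by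
    simp [F, Polynomial.finsetSum_coeff, Polynomial.coeff_monomial, Fin.val_inj]
  have hF_lt (j : ℕ) (hj : d < j) : (finSuccEquiv R n F).coeff j = 0 := by
    simp only [F, AlgEquiv.apply_symm_apply, Polynomial.finsetSum_coeff, Polynomial.coeff_monomial]
    exact Finset.sum_eq_zero fun i _ ↦ if_neg (by lia)
  refine ⟨F, mem_gradedPart.mpr ⟨(hJ F).mpr fun j ↦ ?_, ?_⟩, hF_le⟩
  · rcases le_or_gt j d with hj | hj
    · exact hF_le ⟨j, by lia⟩ ▸ (g ⟨j, by lia⟩).2.1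
    · exact hF_lt j hj ▸ zero_mem (I j)
  · exact isHomogeneous_iff_coeff_finSuccEquiv.mpr
      ⟨fun j hj ↦ hF_le ⟨j, by lia⟩ ▸ (g ⟨j, by lia⟩).2.2, hF_lt⟩

instance {σ : Type*} [Finite σ] (J : Ideal (MvPolynomial σ K)) (d : ℕ) :
    Module.Finite K (gradedPart J d) :=
  have : Module.Finite K (homogeneousSubmodule σ K d) :=
    Module.Finite.iff_fg.mpr (homogeneousSubmodule_fg ..)
  Submodule.finiteDimensional_of_le inf_le_right

lemma finrank_gradedPart_eq_sum_coeff_finSuccEquiv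
    {J : Ideal (MvPolynomial (Fin (n + 1)) K)}
    {I : ℕ → Ideal (MvPolynomial (Fin n) K)}
    (hJ : ∀ F, F ∈ J ↔ ∀ j, (finSuccEquiv K n F).coeff j ∈ I j) (d : ℕ) :
    Module.finrank K (gradedPart J d) =
      ∑ j ∈ Finset.range (d + 1), Module.finrank K (gradedPart (I j) (d - j)) := by
  let coeffs : gradedPart J d →ₗ[K] Π j : Fin (d + 1), gradedPart (I j) (d - j) :=
    LinearMap.pi fun j ↦
      (((Polynomial.lcoeff (MvPolynomial (Fin n) K) j).restrictScalars K ∘ₗ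
        (finSuccEquiv K n).toLinearMap).domRestrict _).codRestrict _ fun F ↦
          ⟨(hJ F).mp F.2.1 j, (isHomogeneous_iff_coeff_finSuccEquiv.mp F.2.2).1 j (by lia)⟩
  have hcoeffs (F : gradedPart J d) (j : Fin (d + 1)) :
      (coeffs F j : MvPolynomial (Fin n) K) = (finSuccEquiv K n F).coeff j := rfl
  have hinj : Function.Injective coeffs := by
    refine (injective_iff_map_eq_zero _).mpr fun F hF ↦
      Subtype.ext ((finSuccEquiv K n).injective (Polynomial.ext fun j ↦ ?_))
    rcases le_or_gt j d with hj | hj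
    · simpa [hcoeffs] using congrArg Subtype.val (congrFun hF ⟨j, by lia⟩)
    · simpa using (isHomogeneous_iff_coeff_finSuccEquiv.mp F.2.2).2 j hj
  have hsurj : Function.Surjective coeffs := fun g ↦ by
    obtain ⟨F, hFJ, hF⟩ := exists_mem_gradedPart_coeff_finSuccEquiv_eq hJ g
    exact ⟨⟨F, hFJ⟩, funext fun j ↦ Subtype.ext (hF j)⟩
  rw [(LinearEquiv.ofBijective coeffs ⟨hinj, hsurj⟩).finrank_eq, Module.finrank_pi_fintype,
    Fin.sum_univ_eq_sum_range fun j ↦ Module.finrank K (gradedPart (I j) (d - j))]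

end Slices

section BinaryForms

variable {R : Type*} [CommRing R] {a b : Fin 2 → R}

/-- The linear form `a₁ X₀ - a₀ X₁`, which cuts out the point `a` of the projective line. -/
noncomputable def pointForm (a : Fin 2 → R) : MvPolynomial (Fin 2) R :=
  C (a 1) * X 0 - C (a 0) * X 1

lemma isHomogeneous_pointForm (a : Fin 2 → R) : (pointForm a).IsHomogeneous 1 :=
  (isHomogeneous_C_mul_X _ _).sub (isHomogeneous_C_mul_X _ _)

lemma eval_pointForm (a b : Fin 2 → R) : eval b (pointForm a) = a 1 * b 0 - a 0 * b 1 := by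
  simp [pointForm]

lemma pointForm_ne_zero (ha : a ≠ 0) : pointForm a ≠ 0 := by
  contrapose! ha
  have h0 := eval_pointForm a ![0, 1]
  have h1 := eval_pointForm a ![1, 0]
  ext i
  fin_cases i <;> simp_all

lemma pointForm_mem_pointIdeal_iff : pointForm a ∈ pointIdeal b ↔ a 1 * b 0 - a 0 * b 1 = 0 := by
  rw [← eval_pointForm, mem_pointIdeal_iff]
  refine ⟨fun h ↦ ?_, fun h n ↦ ?_⟩
  · simpa [homogeneousComponent_eq_self (isHomogeneous_pointForm a)] using h 1
  · rw [homogeneousComponent_of_mem (isHomogeneous_pointForm a)]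
    split_ifs <;> simp [h]

variable {K : Type*} [Field K] {u v : Fin 2 → K}

lemma pointIdeal_eq_span_pointForm (hu : u ≠ 0) : pointIdeal u = Ideal.span {pointForm u} := by
  refine le_antisymm (fun f hf ↦ ?_) <| (Ideal.span_singleton_le_iff_mem _).mpr <|
    pointForm_mem_pointIdeal_iff.mpr (by ring)
  obtain ⟨a, b, hab⟩ : ∃ a b : K, a * u 0 + b * u 1 = 1 := by
    by_cases h0 : u 0 = 0
    · have h1 : u 1 ≠ 0 := fun h1 ↦ hu (by ext i; fin_cases i <;> assumption)
      exact ⟨0, (u 1)⁻¹, by simp [h1]⟩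
    · exact ⟨(u 0)⁻¹, 0, by simp [h0]⟩
  replace hab : C a * C (u 0) + C b * C (u 1) = (1 : MvPolynomial (Fin 2) K) := by
    simp only [← C_mul, ← C_add, hab, C_1]
  -- `X i` is `u i (a X₀ + b X₁)` modulo `pointForm u`, so the class of `f` is determined by the
  -- restriction of `f` to the line.
  let π := Ideal.Quotient.mkₐ K (Ideal.span {pointForm u})
  let extend : Polynomial K →ₐ[K] MvPolynomial (Fin 2) K :=
    Polynomial.aeval (C a * X 0 + C b * X 1)
  have hext : π.comp (extend.comp (lineRestriction u)) = π := by
    refine MvPolynomial.algHom_ext fun i ↦ ?_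
    have hX : extend (lineRestriction u (X i)) = C (u i) * (C a * X 0 + C b * X 1) := by
      simp [lineRestriction, extend, MvPolynomial.algebraMap_eq]
    simp only [AlgHom.comp_apply, hX, π, Ideal.Quotient.mkₐ_eq_mk]
    rw [Ideal.Quotient.eq, Ideal.mem_span_singleton, pointForm]
    fin_cases i
    · exact ⟨-C b, by simp only [Fin.zero_eta]; linear_combination X 0 * hab⟩
    · exact ⟨C a, by simp only [Fin.mk_one]; linear_combination X 1 * hab⟩
  rw [← Ideal.Quotient.eq_zero_iff_mem]
  have hπf := DFunLike.congr_fun hext f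
  simpa [RingHom.mem_ker.mp hf, π] using hπf.symm

lemma prime_pointForm (hu : u ≠ 0) : Prime (pointForm u) := by
  rw [← Ideal.span_singleton_prime (pointForm_ne_zero hu), ← pointIdeal_eq_span_pointForm hu]
  infer_instance

lemma isRelPrime_pointForm (h : LinearIndependent K ![u, v]) :
    IsRelPrime (pointForm u) (pointForm v) := by
  have hu : u ≠ 0 := h.ne_zero 0
  rw [(prime_pointForm hu).irreducible.isRelPrime_iff_not_dvd, ← Ideal.mem_span_singleton,
    ← pointIdeal_eq_span_pointForm hu, pointForm_mem_pointIdeal_iff]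
  have hdet := (Matrix.isUnit_iff_isUnit_det _).mp
    ((Matrix.linearIndependent_rows_iff_isUnit (A := Matrix.of ![u, v])).mp h)
  refine fun hdvd ↦ hdet.ne_zero ?_
  rw [Matrix.det_fin_two]
  change u 0 * v 1 - u 1 * v 0 = 0
  linear_combination hdvd

variable {ι : Type*} [Fintype ι] {w : ι → Fin 2 → K}

lemma iInf_pointIdeal_pow_eq_span (hw : ∀ i, w i ≠ 0)
    (hind : Pairwise fun i j ↦ LinearIndependent K ![w i, w j]) (k : ℕ) :
    ⨅ i, pointIdeal (w i) ^ k = Ideal.span {(∏ i, pointForm (w i)) ^ k} := by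
  ext f
  simp only [Ideal.mem_iInf, pointIdeal_eq_span_pointForm (hw _), Ideal.span_singleton_pow,
    Ideal.mem_span_singleton, ← Finset.prod_pow]
  exact ⟨Fintype.prod_dvd_of_isRelPrime fun i j hij ↦ (isRelPrime_pointForm (hind hij)).pow,
    fun h i ↦ (Finset.dvd_prod_of_mem _ (Finset.mem_univ i)).trans h⟩

lemma finrank_gradedPart_iInf_pointIdeal_pow (hw : ∀ i, w i ≠ 0)
    (hind : Pairwise fun i j ↦ LinearIndependent K ![w i, w j]) (k e : ℕ) :
    Module.finrank K (gradedPart (⨅ i, pointIdeal (w i) ^ k) e) = e + 1 - Fintype.card ι * k := by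
  have hG : ((∏ i, pointForm (w i)) ^ k).IsHomogeneous (Fintype.card ι * k) := by
    simpa using (IsHomogeneous.prod Finset.univ _ _ fun i _ ↦ isHomogeneous_pointForm (w i)).pow k
  have hG0 : (∏ i, pointForm (w i)) ^ k ≠ 0 :=
    pow_ne_zero k (Finset.prod_ne_zero_iff.mpr fun i _ ↦ pointForm_ne_zero (hw i))
  rw [iInf_pointIdeal_pow_eq_span hw hind]
  rcases le_or_gt (Fintype.card ι * k) e with hle | hlt
  · rw [finrank_gradedPart_span_singleton_of_le hG hG0 hle, finrank_homogeneousSubmodule,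
      Fintype.card_fin, Nat.multichoose_two, Nat.sub_add_comm hle]
  · rw [gradedPart_span_singleton_of_lt hG hlt, finrank_bot, Nat.sub_eq_zero_of_le hlt]

lemma finrank_gradedPart_pow_single_zero_inf_iInf_cons_zero (hw : ∀ i, w i ≠ 0)
    (hind : Pairwise fun i j ↦ LinearIndependent K ![w i, w j]) (m d : ℕ) :
    Module.finrank K (gradedPart (pointIdeal (Pi.single 0 1 : Fin 3 → K) ^ m ⊓
        ⨅ i, pointIdeal (Fin.cons 0 (w i) : Fin 3 → K) ^ m) d) =
      ∑ j ∈ Finset.range (d + 1 - m), (d + 1 - j - Fintype.card ι * (m - j)) := by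
  rw [finrank_gradedPart_eq_sum_coeff_finSuccEquiv
    (I := fun j ↦ idealOfVars (Fin 2) K ^ m ⊓ ⨅ i, pointIdeal (w i) ^ (m - j))]
  · rw [← Finset.sum_subset (Finset.range_mono (Nat.sub_le (d + 1) m))]
    · refine Finset.sum_congr rfl fun j hj ↦ ?_
      rw [Finset.mem_range] at hj
      rw [gradedPart_idealOfVars_pow_inf_of_le (by lia),
        finrank_gradedPart_iInf_pointIdeal_pow hw hind, show d - j + 1 = d + 1 - j by lia]
    · intro j hjd hj
      rw [Finset.mem_range] at hjd hj
      rw [gradedPart_idealOfVars_pow_inf_of_lt (by lia), finrank_bot]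
  · intro F
    simp only [Ideal.mem_inf, Ideal.mem_iInf, mem_pointIdeal_single_zero_pow_iff,
      mem_pointIdeal_cons_zero_pow_iff, forall_and, forall_comm (α := ι)]

end BinaryForms

section LinearSubst

variable {σ R : Type*} [Fintype σ] [DecidableEq σ] [CommRing R]

/-- The linear change of coordinates `F ↦ F ∘ A` of the polynomial ring. -/
noncomputable def linearSubst (A : (σ → R) ≃ₗ[R] (σ → R)) :
    MvPolynomial σ R ≃ₐ[R] MvPolynomial σ R :=
  AlgEquiv.ofAlgHom (bind₁ (LinearMap.toMatrix' A.toLinearMap).toMvPolynomial)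
    (bind₁ (LinearMap.toMatrix' A.symm.toLinearMap).toMvPolynomial)
    (algHom_ext fun i ↦ by
      simp [← Matrix.toMvPolynomial_mul, ← LinearMap.toMatrix'_comp])
    (algHom_ext fun i ↦ by
      simp [← Matrix.toMvPolynomial_mul, ← LinearMap.toMatrix'_comp])

lemma isHomogeneous_linearSubst (A : (σ → R) ≃ₗ[R] (σ → R)) {F : MvPolynomial σ R} {d : ℕ}
    (hF : F.IsHomogeneous d) : (linearSubst A F).IsHomogeneous d := by
  have hAF := hF.aeval _ (Matrix.toMvPolynomial_isHomogeneous (LinearMap.toMatrix' A.toLinearMap))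
  rwa [one_mul] at hAF

lemma lineRestriction_linearSubst (A : (σ → R) ≃ₗ[R] (σ → R)) (v : σ → R)
    (F : MvPolynomial σ R) :
    lineRestriction v (linearSubst A F) = lineRestriction (A v) F := by
  suffices h : (lineRestriction v).comp (linearSubst A).toAlgHom = lineRestriction (A v) from
    DFunLike.congr_fun h F
  refine algHom_ext fun i ↦ ?_
  have hAv : A v i = ∑ j, LinearMap.toMatrix' A.toLinearMap i j * v j :=
    (congrFun (LinearMap.toMatrix'_mulVec A.toLinearMap v) i).symm
  simp [linearSubst, lineRestriction, Matrix.toMvPolynomial, aeval_monomial, hAv, Finset.sum_mul,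
    mul_assoc]

lemma comap_linearSubst_pointIdeal_pow (A : (σ → R) ≃ₗ[R] (σ → R)) (v : σ → R) (m : ℕ) :
    (pointIdeal v ^ m).comap (linearSubst A).toRingEquiv = pointIdeal (A v) ^ m := by
  rw [comap_pow_of_ringEquiv]
  congr 1
  ext F
  simp [pointIdeal, RingHom.mem_ker, lineRestriction_linearSubst]

lemma finrank_gradedPart_comap_linearSubst (A : (σ → R) ≃ₗ[R] (σ → R))
    (J : Ideal (MvPolynomial σ R)) (d : ℕ) :
    Module.finrank R (gradedPart (J.comap (linearSubst A).toRingEquiv) d) =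
      Module.finrank R (gradedPart J d) := by
  have hmap : gradedPart J d = (gradedPart (J.comap (linearSubst A).toRingEquiv) d).map
      (linearSubst A).toLinearMap := by
    ext F
    refine ⟨fun ⟨hJ, hF⟩ ↦ ⟨(linearSubst A).symm F, ⟨?_, ?_⟩,
      (linearSubst A).apply_symm_apply F⟩, ?_⟩
    · simpa using hJ
    · exact isHomogeneous_linearSubst A.symm hF
    · rintro ⟨G, ⟨hJ, hG⟩, rfl⟩
      exact ⟨hJ, isHomogeneous_linearSubst A hG⟩
  rw [hmap]
  exact ((linearSubst A).toLinearEquiv.submoduleMap _).finrank_eq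

end LinearSubst

section FatPoints

variable {K : Type*} [Field K]

lemma exists_linearEquiv_single_cons {V : Type*} [AddCommGroup V] [Module K V] {n : ℕ}
    (hV : Module.finrank K V = n + 1) (φ : Module.Dual K V) {p₀ : V} (h : φ p₀ ≠ 0) :
    ∃ A : (Fin (n + 1) → K) ≃ₗ[K] V, A (Pi.single 0 1) = p₀ ∧
      ∀ v, φ v = 0 → ∃ u : Fin n → K, A (Fin.cons 0 u) = v := by
  have : Module.Finite K V := Module.finite_of_finrank_eq_succ hV
  have hφ : φ ≠ 0 := fun hφ ↦ h (by simp [hφ])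
  have hker : Module.finrank K (LinearMap.ker φ) = n := by
    have := Module.Dual.finrank_ker_add_one_of_ne_zero hφ
    lia
  let b : Module.Basis (Fin (n + 1)) K V :=
    Module.Basis.mkFinCons p₀ (Module.finBasisOfFinrankEq K (LinearMap.ker φ) hker)
      (fun c x hx hcx ↦ by simpa [LinearMap.mem_ker.mp hx, h] using congrArg φ hcx)
      (fun z ↦ ⟨-(φ z / φ p₀), by simp [h]⟩)
  have hb0 : b 0 = p₀ := by simp [b, Module.Basis.coe_mkFinCons]
  have hbs (i : Fin n) : φ (b i.succ) = 0 := by simp [b, Module.Basis.coe_mkFinCons]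
  refine ⟨b.equivFun.symm, by simp [hb0], fun v hv ↦ ⟨fun i ↦ b.equivFun v i.succ, ?_⟩⟩
  have hv0 : b.equivFun v 0 = 0 := by
    rw [← b.sum_equivFun v, map_sum, Fin.sum_univ_succ] at hv
    simpa [hbs, hb0, h] using hv
  rw [LinearEquiv.symm_apply_eq, ← Fin.cons_self_tail (b.equivFun v), hv0]
  rfl

lemma finrank_gradedPart_pow_inf_iInf_of_collinear {ι : Type*} [Fintype ι] {p₀ : Fin 3 → K}
    {p : ι → Fin 3 → K} (hp : ∀ i, p i ≠ 0)
    (hind : Pairwise fun i j ↦ LinearIndependent K ![p i, p j]) (φ : Module.Dual K (Fin 3 → K))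
    (h₀ : φ p₀ ≠ 0) (hφ : ∀ i, φ (p i) = 0) (m d : ℕ) :
    Module.finrank K (gradedPart (pointIdeal p₀ ^ m ⊓ ⨅ i, pointIdeal (p i) ^ m) d) =
      ∑ j ∈ Finset.range (d + 1 - m), (d + 1 - j - Fintype.card ι * (m - j)) := by
  obtain ⟨A : (Fin 3 → K) ≃ₗ[K] (Fin 3 → K), rfl, hA⟩ :=
    exists_linearEquiv_single_cons (n := 2) (by simp) φ h₀
  choose w hw using fun i ↦ hA (p i) (hφ i)
  let T : (Fin 2 → K) →ₗ[K] Fin 3 → K :=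
    A.toLinearMap ∘ₗ (Fin.consLinearEquiv K fun _ : Fin 3 ↦ K).toLinearMap ∘ₗ LinearMap.inr K K _
  have hT (i : ι) : T (w i) = p i := hw i
  have hw0 (i : ι) : w i ≠ 0 := fun h ↦ hp i (by rw [← hT, h, map_zero])
  have hwind : Pairwise fun i j ↦ LinearIndependent K ![w i, w j] := fun i j hij ↦ by
    have hTw : T ∘ ![w i, w j] = ![p i, p j] := by
      ext k : 1
      fin_cases k <;> simp [hT]
    exact .of_comp T (hTw ▸ hind hij)
  have hcomap : pointIdeal (A (Pi.single 0 1)) ^ m ⊓ ⨅ i, pointIdeal (p i) ^ m =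
      (pointIdeal (Pi.single 0 1) ^ m ⊓ ⨅ i, pointIdeal (Fin.cons 0 (w i)) ^ m).comap
        (linearSubst A).toRingEquiv := by
    simp_rw [Ideal.comap_inf, Ideal.comap_iInf, comap_linearSubst_pointIdeal_pow, hw]
  rw [hcomap, finrank_gradedPart_comap_linearSubst,
    finrank_gradedPart_pow_single_zero_inf_iInf_cons_zero hw0 hwind]

end FatPoints

section Arithmetic

lemma two_mul_sum_range_add_mul {R : Type*} [CommRing R] (a b : R) (n : ℕ) :
    2 * ∑ t ∈ Finset.range n, (a + b * t) = n * (2 * a + b * (n - 1)) := by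
  induction n with
  | zero => simp
  | succ n ih => rw [Finset.sum_range_succ, mul_add, ih]; push_cast; ring

lemma ceilDiv_pred_le_iff_mul_sub_le {l m d j : ℕ} (hl : 2 ≤ l) (hjm : j ≤ m) (hjd : j ≤ d) :
    (l * m - d) ⌈/⌉ (l - 1) ≤ j ↔ l * (m - j) ≤ d - j := by
  obtain ⟨k, rfl⟩ := Nat.exists_eq_add_of_le' (show 1 ≤ l by lia)
  rw [Nat.add_sub_cancel, ceilDiv_le_iff_le_mul (by lia), Nat.mul_sub]
  have := Nat.mul_le_mul_left k hjm
  constructor <;> intro <;> lia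

lemma two_mul_sum_range_sub_mul_sub {l m d q : ℕ} (hmd : 2 * m ≤ d + 1) (hqm : q ≤ m)
    (hlt : ∀ j < q, d + 1 - j ≤ l * (m - j)) (hge : ∀ j ≤ m, q ≤ j → l * (m - j) ≤ d + 1 - j) :
    2 * ((∑ j ∈ Finset.range (d + 1 - m), (d + 1 - j - l * (m - j)) : ℕ) : ℤ) =
      ((d : ℤ) - q) ^ 2 + 3 * ((d : ℤ) - q) - l * (((m : ℤ) - q) ^ 2 + ((m : ℤ) - q))
        - ((m : ℤ) ^ 2 + m) + 2 := by
  obtain ⟨a, rfl⟩ := Nat.exists_eq_add_of_le hqm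
  obtain ⟨b, hd⟩ := Nat.exists_eq_add_of_le hmd
  have hdℤ : (d : ℤ) = 2 * (q + a) + b - 1 := by lia
  have hbelow : ∑ j ∈ Finset.range q, (d + 1 - j - l * (q + a - j)) = 0 :=
    Finset.sum_eq_zero fun j hj ↦ Nat.sub_eq_zero_of_le (hlt j (Finset.mem_range.mp hj))
  have hmiddle : ∀ t ∈ Finset.range a, ((d + 1 - (q + t) - l * (q + a - (q + t)) : ℕ) : ℤ) =
      (q + 2 * a + b - l * a) + (l - 1) * t := fun t ht ↦ by
    rw [Finset.mem_range] at ht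
    rw [Nat.cast_sub (hge (q + t) (by lia) (by lia)), Nat.cast_mul, Nat.cast_sub (by lia),
      Nat.cast_sub (by lia)]
    push_cast
    linear_combination hdℤ
  have habove : ∀ t ∈ Finset.range b,
      ((d + 1 - (q + a + t) - l * (q + a - (q + a + t)) : ℕ) : ℤ) = (q + a + b) + (-1) * t :=
    fun t ht ↦ by
      rw [Finset.mem_range] at ht
      rw [Nat.sub_eq_zero_of_le (Nat.le_add_right _ t)]
      lia
  rw [show d + 1 - (q + a) = q + a + b by lia, Finset.sum_range_add, Finset.sum_range_add, hbelow,
    zero_add, Nat.cast_add, Nat.cast_sum, Nat.cast_sum, Finset.sum_congr rfl hmiddle,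
    Finset.sum_congr rfl habove, mul_add, two_mul_sum_range_add_mul, two_mul_sum_range_add_mul, hdℤ]
  push_cast
  ring

lemma sum_range_sub_mul_sub_eq {l m d q : ℕ} (hmd : 2 * m ≤ d + 1) (hdm : d < l * m)
    (hq : q = (l * m - d) ⌈/⌉ (l - 1)) :
    ((∑ j ∈ Finset.range (d + 1 - m), (d + 1 - j - l * (m - j)) : ℕ) : ℤ) =
      (((d : ℤ) - q) ^ 2 + 3 * ((d : ℤ) - q)
        - l * (((m : ℤ) - q) ^ 2 + ((m : ℤ) - q)) - ((m : ℤ) ^ 2 + m)) / 2 + 1 := by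
  have hl : 2 ≤ l := by nlinarith
  have hm : 1 ≤ m := by nlinarith
  have hq_le (j : ℕ) (hj : j ≤ m) : q ≤ j ↔ l * (m - j) ≤ d - j :=
    hq ▸ ceilDiv_pred_le_iff_mul_sub_le hl hj (by lia)
  have hqm : q ≤ m := (hq_le m le_rfl).mpr (by simp)
  have htwice := two_mul_sum_range_sub_mul_sub hmd hqm (l := l)
    (fun j hj ↦ by have := mt (hq_le j (by lia)).mpr; lia)
    (fun j hjm hj ↦ by have := (hq_le j hjm).mp; lia)
  lia

end Arithmetic

theorem stmt_2_general
    (K : Type*) [Field K]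
    (l : ℕ)
    (p : Fin (l + 1) → Fin 3 → K) (hp0 : ∀ i, p i ≠ 0)
    (hdist : ∀ i j, i ≠ j → ∀ c : K, c • p i ≠ p j)
    (L : Fin 3 → K)
    (hon : ∀ i : Fin (l + 1), (i : ℕ) < l → ∑ j, L j * p i j = 0)
    (hoff : ∑ j, L j * p (Fin.last l) j ≠ 0)
    (P : Fin (l + 1) → Ideal (MvPolynomial (Fin 3) K))
    (hP : ∀ i F, F ∈ P i ↔ ∀ n, eval (p i) (homogeneousComponent n F) = 0)
    (m d : ℕ) (hmd : 2 * m ≤ d + 1) (hdm : d < l * m)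
    (q : ℕ) (hq : q = (l * m - d) ⌈/⌉ (l - 1)) :
    (hdim (⨅ i, P i ^ m) d : ℤ) =
      (((d : ℤ) - q) ^ 2 + 3 * ((d : ℤ) - q)
        - l * (((m : ℤ) - q) ^ 2 + ((m : ℤ) - q)) - ((m : ℤ) ^ 2 + m)) / 2 + 1 := by
  obtain rfl : P = fun i ↦ pointIdeal (p i) :=
    funext fun i ↦ Ideal.ext fun F ↦ (hP i F).trans mem_pointIdeal_iff.symm
  have hsplit : ⨅ i, pointIdeal (p i) ^ m =
      pointIdeal (p (Fin.last l)) ^ m ⊓ ⨅ i : Fin l, pointIdeal (p i.castSucc) ^ m := by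
    ext F
    simp only [Ideal.mem_inf, Ideal.mem_iInf, Fin.forall_fin_succ', and_comm]
  rw [← sum_range_sub_mul_sub_eq hmd hdm hq, hsplit]
  have hfinrank := finrank_gradedPart_pow_inf_iInf_of_collinear (fun i : Fin l ↦ hp0 i.castSucc)
    (fun i j hij ↦ (LinearIndependent.pair_iff' (hp0 _)).mpr (hdist _ _ (by simpa using hij)))
    (dotProductBilin K K L) hoff (fun i ↦ hon _ i.2) m d
  rw [Fintype.card_fin] at hfinrank
  exact congrArg Nat.cast hfinrank

theorem stmt_2
    (K : Type*) [Field K] [CharZero K]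
    -- `l > 2` points on a line plus one point off the line
    (l : ℕ) (hl : 2 < l)
    (p : Fin (l + 1) → Fin 3 → K) (hp0 : ∀ i, p i ≠ 0)
    (hdist : ∀ i j, i ≠ j → ∀ c : K, c • p i ≠ p j)
    (L : Fin 3 → K) (hL : L ≠ 0)
    (hon : ∀ i : Fin (l + 1), (i : ℕ) < l → ∑ j, L j * p i j = 0)
    (hoff : ∑ j, L j * p (Fin.last l) j ≠ 0)
    -- `P i` is the homogeneous prime ideal of all forms vanishing at `p i`
    (P : Fin (l + 1) → Ideal (MvPolynomial (Fin 3) K))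
    (hP : ∀ i F, F ∈ P i ↔ ∀ n, eval (p i) (homogeneousComponent n F) = 0)
    -- the uniform fat point ideal `I^{(m)} = P_1^m ∩ ⋯ ∩ P_{l+1}^m`
    (m : ℕ) (hm : 1 ≤ m)
    (Im : Ideal (MvPolynomial (Fin 3) K)) (hIm : Im = ⨅ i, P i ^ m) :
    ∀ d : ℕ, 2 * m ≤ d → d < l * m →
      -- `q = ⌈(lm − d)/(l − 1)⌉`
      ∀ q : ℕ, q = (l * m - d) ⌈/⌉ (l - 1) →
      (hdim Im d : ℤ) =
        (((d : ℤ) - q) ^ 2 + 3 * ((d : ℤ) - q)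
          - l * (((m : ℤ) - q) ^ 2 + ((m : ℤ) - q)) - ((m : ℤ) ^ 2 + m)) / 2 + 1 := by
  subst hIm
  exact fun d hmd hdm q hq ↦
    stmt_2_general K l p hp0 hdist L hon hoff P hP m d (by lia) hdm q hq
end
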